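/- arXiv:2406.06926 — 2 statements merged into one kernel-verified Lean document; each statement's English description precedes it below -/
import Mathlib

section
/- Let d ≥ 2, 0 < s ≤ 1, 1 < γ < ∞, 1 ≤ p, q < ∞, 0 < α ≤ 1, and 0 < β₁, β₂ < ∞ be such that β₁p + 2β₂q = 1 and (d − sp)β₁ + (d + α)β₂ = d/γ, and 𝒟 = p(d+α) − 2q(d−sp) ≠ 0. Assume β₁γ + β₂γ < 1. Then there is NO constant C > 0 such that ‖g‖_{L^γ(ℝ^d)} ≤ C ‖g‖_{Ẇ^{s,p}(ℝ^d)}^{β₁p} ( ∫_{ℝ^d}∫_{ℝ^d} |g(x)|^q |g(y)|^q / |x−y|^{d−α} dx dy )^{β₂} holds for all radial g ∈ C¹_{c,rad}(ℝ^d). -/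
open MeasureTheory Real

/-- Homogeneous (fractional) Sobolev seminorm `‖g‖_{Ẇ^{s,p}(ℝ^d)}`:
for `0 < s < 1` the Gagliardo seminorm, for `s = 1` the `L^p` norm of the gradient. -/
noncomputable def sobolevSemi (d : ℕ) (s p : ℝ) (g : EuclideanSpace ℝ (Fin d) → ℝ) : ℝ :=
  if s = 1 then (∫ x, ‖fderiv ℝ g x‖ ^ p) ^ (1 / p)
  else if s = 0 then (∫ x, |g x| ^ p) ^ (1 / p)
  else (∫ x, ∫ y, |g x - g y| ^ p / ‖x - y‖ ^ ((d : ℝ) + s * p)) ^ (1 / p)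

/-- The Coulomb energy `∫∫ |g x|^q |g y|^q / |x-y|^{d-α} dx dy`. -/
noncomputable def coulombEnergy (d : ℕ) (q α : ℝ) (g : EuclideanSpace ℝ (Fin d) → ℝ) : ℝ :=
  ∫ x, ∫ y, |g x| ^ q * |g y| ^ q / ‖x - y‖ ^ ((d : ℝ) - α)

/-!
Test the inequality on radial functions that equal `1` near the sphere of radius `R`, with a fixed
`C¹` profile across a shell of fixed thickness. The shell has volume of order `R ^ (d - 1)`, so
`∫ |g| ^ γ` is at least, and the `p`-th power of the Sobolev seminorm at most, of that order.

At large scale a thin shell is `(d - 1)`-dimensional. Its potential with kernel `‖x - y‖ ^ (-r)` is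
therefore bounded uniformly in `R` when `d - 1 < r < d`: averaged over dilations of the shell, the
potential becomes an integral over the whole space of a kernel with one more power of decay, because
a ray from the origin meets the dilates of a thin shell only for a short time. Since the shell has
diameter of order `R`, the exponent `d - α`, which is at least `d - 1`, may be raised by a small `ε`
at the cost of a factor `R ^ ε`, and the energy is `O(R ^ (d - 1 + ε))`.

The inequality would thus force `(d - 1) / γ ≤ (d - 1) * β₁ + (d - 1 + ε) * β₂` for all small
`ε > 0`, that is `1 / γ ≤ β₁ + β₂`.
-/

open Asymptotics Filter Metric Module Set
open scoped ENNReal NNReal Topology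

section Asymptotics

lemma isBigO_of_enorm_le_mul {α : Type*} {l : Filter α} {f g : α → ℝ} {C : ℝ≥0∞} (hC : C ≠ ⊤)
    (h : ∀ᶠ x in l, ‖f x‖ₑ ≤ C * ‖g x‖ₑ) : f =O[l] g := by
  lift C to ℝ≥0 using hC
  refine .of_bound C (h.mono fun x hx ↦ ?_)
  simp only [enorm_eq_nnnorm] at hx
  exact_mod_cast hx

lemma isLittleO_rpow_rpow_atTop {a b : ℝ} (h : a < b) :
    (fun x : ℝ ↦ x ^ a) =o[atTop] fun x ↦ x ^ b := by
  refine (isLittleO_iff_tendsto' ?_).2 ?_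
  · filter_upwards [eventually_gt_atTop 0] with x hx h0
    exact absurd h0 (rpow_pos_of_pos hx b).ne'
  · refine (tendsto_rpow_neg_atTop (sub_pos.2 h)).congr' ?_
    filter_upwards [eventually_gt_atTop 0] with x hx
    rw [← rpow_sub hx, neg_sub]

lemma not_isBigO_rpow_rpow_atTop {a b : ℝ} (h : b < a) :
    ¬ (fun x : ℝ ↦ x ^ a) =O[atTop] fun x ↦ x ^ b := by
  refine (isLittleO_rpow_rpow_atTop h).not_isBigO (Eventually.frequently ?_)
  filter_upwards [eventually_gt_atTop 0] with x hx using (rpow_pos_of_pos hx b).ne'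

lemma isBigO_rpow_mul_of_isBigO_rpow {f : ℝ → ℝ} {a b : ℝ} (h : f =O[atTop] fun x ↦ x ^ a)
    (hb : 0 ≤ b) : (fun x ↦ f x ^ b) =O[atTop] fun x ↦ x ^ (a * b) := by
  have hnonneg : ∀ᶠ x : ℝ in atTop, 0 ≤ x ^ a :=
    (eventually_ge_atTop 0).mono fun x hx ↦ rpow_nonneg hx a
  refine (h.rpow hb hnonneg).congr' .rfl ?_
  filter_upwards [eventually_ge_atTop 0] with x hx using (rpow_mul hx a b).symm

lemma rpow_mul_isBigO_of_rpow_isBigO {f : ℝ → ℝ} {a b : ℝ} (hf : 0 ≤ᶠ[atTop] f)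
    (h : (fun x ↦ x ^ a) =O[atTop] f) (hb : 0 ≤ b) :
    (fun x ↦ x ^ (a * b)) =O[atTop] fun x ↦ f x ^ b := by
  refine (h.rpow hb hf).congr' ?_ .rfl
  filter_upwards [eventually_ge_atTop 0] with x hx using (rpow_mul hx a b).symm

end Asymptotics

section Kernels

lemma rpow_neg_le_two_rpow_mul {r t : ℝ} (hr : 0 ≤ r) (ht : 1 ≤ t) :
    t ^ (-r) ≤ 2 ^ r * (1 + t) ^ (-r) := by
  calc t ^ (-r) ≤ ((1 + t) / 2) ^ (-r) :=
        rpow_le_rpow_of_nonpos (by positivity) (by linarith) (by linarith)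
    _ = 2 ^ r * (1 + t) ^ (-r) := by
        rw [div_rpow (by positivity) (by norm_num), rpow_neg (x := 2) (by norm_num)]
        field_simp

variable {E : Type*} [NormedAddCommGroup E] [NormedSpace ℝ E] [FiniteDimensional ℝ E]
  [MeasurableSpace E] [BorelSpace E] (μ : Measure E) [μ.IsAddHaarMeasure]

lemma integrableOn_ball_norm_rpow_neg [Nontrivial E] {r : ℝ} (hr : r < finrank ℝ E) :
    IntegrableOn (fun z : E ↦ ‖z‖ ^ (-r)) (ball 0 1) μ := by
  refine integrableOn_ball_of_norm_le_rpow finrank_pos hr (C := 1) ?_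
    (by fun_prop : Measurable fun z : E ↦ ‖z‖ ^ (-r)).aestronglyMeasurable
  exact .of_forall fun z ↦ by rw [norm_of_nonneg (by positivity), one_mul]

lemma integrable_min_norm_rpow_neg [Nontrivial E] {a b : ℝ} (ha : a < finrank ℝ E)
    (hb : finrank ℝ E < b) :
    Integrable (fun z : E ↦ min (‖z‖ ^ (-a)) (‖z‖ ^ (-b))) μ := by
  have hmeas : AEStronglyMeasurable (fun z : E ↦ min (‖z‖ ^ (-a)) (‖z‖ ^ (-b))) μ :=
    (by fun_prop : Measurable _).aestronglyMeasurable
  have hnorm (z : E) :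
      ‖min (‖z‖ ^ (-a)) (‖z‖ ^ (-b))‖ = min (‖z‖ ^ (-a)) (‖z‖ ^ (-b)) :=
    norm_of_nonneg (by positivity)
  rw [← integrableOn_univ, ← union_compl_self (ball (0 : E) 1)]
  refine IntegrableOn.union ?_ ?_
  · refine (integrableOn_ball_norm_rpow_neg μ ha).mono' hmeas.restrict (.of_forall fun z ↦ ?_)
    exact (hnorm z).trans_le (min_le_left _ _)
  · refine ((integrable_one_add_norm hb).const_mul (2 ^ b)).integrableOn.mono' hmeas.restrict ?_
    refine ae_restrict_of_forall_mem measurableSet_ball.compl fun z hz ↦ ?_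
    rw [hnorm]
    exact (min_le_right _ _).trans
      (rpow_neg_le_two_rpow_mul ((Nat.cast_nonneg _).trans hb.le) (by simpa using hz))

end Kernels

section LipschitzEnergies

lemma enorm_integral_integral_le {α β : Type*} [MeasurableSpace α] [MeasurableSpace β]
    (μ : Measure α) (ν : Measure β) (f : α → β → ℝ) :
    ‖∫ x, ∫ y, f x y ∂ν ∂μ‖ₑ ≤ ∫⁻ x, ∫⁻ y, ‖f x y‖ₑ ∂ν ∂μ :=
  (enorm_integral_le_lintegral_enorm _).trans
    (lintegral_mono fun _ ↦ enorm_integral_le_lintegral_enorm _)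

lemma abs_sub_rpow_div_le_of_lipschitzWith {E : Type*} [NormedAddCommGroup E] {g : E → ℝ} {L : ℝ≥0}
    (hL : LipschitzWith L g) (hg : ∀ x y, |g x - g y| ≤ 1) {p : ℝ} (hp : 0 < p) (a : ℝ) (x y : E) :
    |g x - g y| ^ p / ‖x - y‖ ^ a ≤
      max 1 ((L : ℝ) ^ p) * min (‖x - y‖ ^ (-(a - p))) (‖x - y‖ ^ (-a)) := by
  rcases eq_or_ne x y with rfl | hxy
  · rw [sub_self, abs_zero, zero_rpow hp.ne', zero_div]
    positivity
  have hn : 0 < ‖x - y‖ := norm_pos_iff.2 (sub_ne_zero.2 hxy)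
  rw [mul_min_of_nonneg _ _ (by positivity)]
  refine le_min ?_ ?_
  · calc |g x - g y| ^ p / ‖x - y‖ ^ a ≤ (L * ‖x - y‖) ^ p / ‖x - y‖ ^ a := by
          gcongr
          simpa [Real.dist_eq, dist_eq_norm] using hL.dist_le_mul x y
      _ = (L : ℝ) ^ p * ‖x - y‖ ^ (-(a - p)) := by
          rw [mul_rpow (by positivity) (by positivity), neg_sub, rpow_sub hn, mul_div_assoc]
      _ ≤ _ := by gcongr; exact le_max_right _ _
  · calc |g x - g y| ^ p / ‖x - y‖ ^ a ≤ 1 / ‖x - y‖ ^ a := by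
          gcongr
          exact rpow_le_one (abs_nonneg _) (hg x y) hp.le
      _ = 1 * ‖x - y‖ ^ (-a) := by rw [rpow_neg hn.le, one_mul, one_div]
      _ ≤ _ := by gcongr; exact le_max_left _ _

lemma enorm_integral_norm_fderiv_rpow_le_of_lipschitzWith {E : Type*} [NormedAddCommGroup E]
    [NormedSpace ℝ E] [MeasurableSpace E] (μ : Measure E) {g : E → ℝ} {L : ℝ≥0}
    (hL : LipschitzWith L g) {S : Set E} (hS : IsClosed S) (hgS : ∀ x ∉ S, g x = 0) {p : ℝ}
    (hp : 0 < p) :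
    ‖∫ x, ‖fderiv ℝ g x‖ ^ p ∂μ‖ₑ ≤ .ofReal ((L : ℝ) ^ p) * μ S := by
  have hsupp : Function.support (fderiv ℝ g) ⊆ S :=
    (support_fderiv_subset ℝ).trans
      (closure_minimal (fun x hx ↦ not_imp_comm.1 (hgS x) hx) hS)
  rw [← setIntegral_eq_integral_of_forall_compl_eq_zero (s := S) fun x hx ↦ by
    simp [Function.notMem_support.1 fun h ↦ hx (hsupp h), zero_rpow hp.ne']]
  calc ‖∫ x in S, ‖fderiv ℝ g x‖ ^ p ∂μ‖ₑ ≤ ∫⁻ x in S, ‖‖fderiv ℝ g x‖ ^ p‖ₑ ∂μ :=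
        enorm_integral_le_lintegral_enorm _
    _ ≤ ∫⁻ _ in S, .ofReal ((L : ℝ) ^ p) ∂μ := by
        refine lintegral_mono fun x ↦ ?_
        rw [Real.enorm_of_nonneg (by positivity)]
        exact ENNReal.ofReal_le_ofReal
          (rpow_le_rpow (norm_nonneg _) (norm_fderiv_le_of_lipschitz ℝ hL) hp.le)
    _ = _ := setLIntegral_const _ _

variable {E : Type*} [NormedAddCommGroup E] [NormedSpace ℝ E] [FiniteDimensional ℝ E]
  [MeasurableSpace E] [BorelSpace E] (μ : Measure E) [μ.IsAddHaarMeasure]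

lemma lintegral_lintegral_indicator_add_mul_sub {S : Set E} (hS : MeasurableSet S)
    {k : E → ℝ≥0∞} (hk : Measurable k) :
    ∫⁻ x, ∫⁻ y, (S.indicator 1 x + S.indicator 1 y) * k (x - y) ∂μ ∂μ =
      2 * (∫⁻ z, k z ∂μ) * μ S := by
  have hχ : Measurable (S.indicator (1 : E → ℝ≥0∞)) := measurable_one.indicator hS
  have hleft : ∫⁻ x, ∫⁻ y, S.indicator 1 x * k (x - y) ∂μ ∂μ = μ S * ∫⁻ z, k z ∂μ := by
    rw [← lintegral_indicator_one hS, ← lintegral_mul_const _ hχ]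
    refine lintegral_congr fun x ↦ ?_
    rw [lintegral_const_mul _ (by fun_prop), lintegral_sub_left_eq_self]
  have hright : ∫⁻ x, ∫⁻ y, S.indicator 1 y * k (x - y) ∂μ ∂μ = μ S * ∫⁻ z, k z ∂μ := by
    rw [lintegral_lintegral_swap (by fun_prop), ← lintegral_indicator_one hS,
      ← lintegral_mul_const _ hχ]
    refine lintegral_congr fun y ↦ ?_
    rw [lintegral_const_mul _ (by fun_prop), lintegral_sub_right_eq_self]
  calc ∫⁻ x, ∫⁻ y, (S.indicator 1 x + S.indicator 1 y) * k (x - y) ∂μ ∂μ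
      = ∫⁻ x, (∫⁻ y, S.indicator 1 x * k (x - y) ∂μ +
          ∫⁻ y, S.indicator 1 y * k (x - y) ∂μ) ∂μ := by
        refine lintegral_congr fun x ↦ ?_
        simp_rw [add_mul]
        exact lintegral_add_left (by fun_prop) _
    _ = μ S * ∫⁻ z, k z ∂μ + μ S * ∫⁻ z, k z ∂μ := by
        rw [lintegral_add_left (Measurable.lintegral_prod_right (by fun_prop)), hleft, hright]
    _ = _ := by ring

lemma enorm_gagliardo_le_of_lipschitzWith {g : E → ℝ} {L : ℝ≥0} (hL : LipschitzWith L g)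
    (hg : ∀ x y, |g x - g y| ≤ 1) {S : Set E} (hS : MeasurableSet S) (hgS : ∀ x ∉ S, g x = 0)
    {p : ℝ} (hp : 0 < p) (a : ℝ) :
    ‖∫ x, ∫ y, |g x - g y| ^ p / ‖x - y‖ ^ a ∂μ ∂μ‖ₑ ≤
      2 * (∫⁻ z, .ofReal (max 1 ((L : ℝ) ^ p) * min (‖z‖ ^ (-(a - p))) (‖z‖ ^ (-a))) ∂μ) *
        μ S := by
  rw [← lintegral_lintegral_indicator_add_mul_sub μ hS (by fun_prop)]
  refine (enorm_integral_integral_le μ μ _).trans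
    (lintegral_mono fun x ↦ lintegral_mono fun y ↦ ?_)
  by_cases hxy : x ∉ S ∧ y ∉ S
  · simp [hgS x hxy.1, hgS y hxy.2, zero_rpow hp.ne']
  have hone : 1 ≤ S.indicator (1 : E → ℝ≥0∞) x + S.indicator 1 y := by
    by_cases hx : x ∈ S
    · simp [hx]
    · simp [show y ∈ S by tauto]
  calc ‖|g x - g y| ^ p / ‖x - y‖ ^ a‖ₑ = .ofReal (|g x - g y| ^ p / ‖x - y‖ ^ a) :=
        Real.enorm_of_nonneg (by positivity)
    _ ≤ _ := ENNReal.ofReal_le_ofReal (abs_sub_rpow_div_le_of_lipschitzWith hL hg hp a x y)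
    _ ≤ _ := le_mul_of_one_le_left zero_le hone

end LipschitzEnergies

section Annulus

lemma isTheta_add_pow_succ_sub_sub_pow_succ {ρ : ℝ} (hρ : 0 < ρ) (n : ℕ) :
    (fun R : ℝ ↦ (R + ρ) ^ (n + 1) - (R - ρ) ^ (n + 1)) =Θ[atTop] fun R ↦ R ^ n := by
  refine ⟨.of_bound (2 * ρ * (n + 1) * 2 ^ n) ?_, .of_bound (2 * ρ)⁻¹ ?_⟩ <;>
    filter_upwards [eventually_gt_atTop ρ] with R hR
  · have hR₀ : 0 < R := hρ.trans hR
    have hdiff := abs_pow_sub_pow_le (R + ρ) (R - ρ) (n + 1)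
    rw [show R + ρ - (R - ρ) = 2 * ρ by ring, abs_of_pos (by positivity : 0 < 2 * ρ),
      abs_of_pos (by positivity : 0 < R + ρ), abs_of_pos (sub_pos.2 hR),
      max_eq_left (by linarith), Nat.add_sub_cancel] at hdiff
    calc |(R + ρ) ^ (n + 1) - (R - ρ) ^ (n + 1)| ≤ 2 * ρ * ↑(n + 1) * (R + ρ) ^ n := hdiff
      _ ≤ 2 * ρ * ↑(n + 1) * (2 * R) ^ n := by
          have : R + ρ ≤ 2 * R := by linarith
          gcongr
      _ = 2 * ρ * (n + 1) * 2 ^ n * ‖R ^ n‖ := by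
          rw [norm_of_nonneg (by positivity), mul_pow]
          push_cast
          ring
  · have hR₀ : 0 < R := hρ.trans hR
    have hpow : (R - ρ) ^ n ≤ (R + ρ) ^ n :=
      pow_le_pow_left₀ (sub_nonneg.2 hR.le) (by linarith) n
    rw [norm_of_nonneg (by positivity), le_inv_mul_iff₀ (by positivity)]
    calc 2 * ρ * R ^ n ≤ 2 * ρ * (R + ρ) ^ n := by
          have : R ≤ R + ρ := by linarith
          gcongr
      _ = (R + ρ) ^ (n + 1) - (R + ρ) ^ n * (R - ρ) := by ring
      _ ≤ (R + ρ) ^ (n + 1) - (R - ρ) ^ n * (R - ρ) := by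
          gcongr
      _ = (R + ρ) ^ (n + 1) - (R - ρ) ^ (n + 1) := by rw [pow_succ (R - ρ)]
      _ ≤ _ := le_abs_self _

/-- The closed annulus `{x | a ≤ ‖x‖ ≤ b}` centred at the origin of `E`; with `a` and `b` close
together it is the thin shell that carries the test functions. The space `E` is explicit because it
cannot be inferred from the radii. -/
def closedAnnulus (E : Type*) [NormedAddCommGroup E] (a b : ℝ) : Set E := {x | ‖x‖ ∈ Icc a b}

section Normed

variable {E : Type*} [NormedAddCommGroup E] {a b : ℝ}

lemma isClosed_closedAnnulus : IsClosed (closedAnnulus E a b) :=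
  isClosed_Icc.preimage continuous_norm

lemma closedAnnulus_eq_sdiff : closedAnnulus E a b = closedBall 0 b \ ball 0 a := by
  ext x
  simp [closedAnnulus, and_comm]

lemma inv_smul_mem_closedAnnulus_iff [NormedSpace ℝ E] (ha : 0 < a) (hb : 0 < b) {t : ℝ}
    (ht : 0 < t) (v : E) : t⁻¹ • v ∈ closedAnnulus E a b ↔ t ∈ Icc (‖v‖ / b) (‖v‖ / a) := by
  have hnorm : ‖t⁻¹ • v‖ = ‖v‖ / t := by
    rw [norm_smul, norm_inv, norm_of_nonneg ht.le, inv_mul_eq_div]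
  simp only [closedAnnulus, mem_ofPred_eq, hnorm, mem_Icc]
  rw [le_div_comm₀ ha ht, div_le_comm₀ ht hb, and_comm]

lemma measurableSet_closedAnnulus [MeasurableSpace E] [OpensMeasurableSpace E] :
    MeasurableSet (closedAnnulus E a b) :=
  isClosed_closedAnnulus.measurableSet

lemma measure_closedAnnulus_lt_top [MeasurableSpace E] [ProperSpace E] (μ : Measure E)
    [IsFiniteMeasureOnCompacts μ] : μ (closedAnnulus E a b) < ⊤ :=
  (measure_mono (closedAnnulus_eq_sdiff.trans_subset sdiff_subset)).trans_lt
    measure_closedBall_lt_top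

end Normed

variable {E : Type*} [NormedAddCommGroup E] [NormedSpace ℝ E] [FiniteDimensional ℝ E]
  [MeasurableSpace E] [BorelSpace E] (μ : Measure E) [μ.IsAddHaarMeasure]

lemma measureReal_closedAnnulus {a b : ℝ} (ha : 0 < a) (hab : a ≤ b) :
    μ.real (closedAnnulus E a b) =
      (b ^ finrank ℝ E - a ^ finrank ℝ E) * μ.real (ball (0 : E) 1) := by
  have hball : μ.real (ball (0 : E) a) = a ^ finrank ℝ E * μ.real (ball (0 : E) 1) := by
    rw [measureReal_def, Measure.addHaar_ball_of_pos μ 0 ha, ENNReal.toReal_mul,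
      ENNReal.toReal_ofReal (by positivity), measureReal_def]
  rw [closedAnnulus_eq_sdiff,
    measureReal_sdiff (ball_subset_closedBall.trans (closedBall_subset_closedBall hab))
      measurableSet_ball measure_closedBall_lt_top.ne,
    Measure.addHaar_real_closedBall μ 0 (ha.le.trans hab), hball, sub_mul]

lemma isTheta_measureReal_closedAnnulus [Nontrivial E] {ρ : ℝ} (hρ : 0 < ρ) :
    (fun R ↦ μ.real (closedAnnulus E (R - ρ) (R + ρ))) =Θ[atTop]
      fun R : ℝ ↦ R ^ ((finrank ℝ E : ℝ) - 1) := by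
  have hball : μ.real (ball (0 : E) 1) ≠ 0 :=
    (ENNReal.toReal_pos (measure_ball_pos μ 0 one_pos).ne' measure_ball_lt_top.ne).ne'
  obtain ⟨n, hn⟩ : ∃ n, finrank ℝ E = n + 1 := Nat.exists_eq_succ_of_ne_zero finrank_pos.ne'
  have hvol : (fun R ↦ μ.real (closedAnnulus E (R - ρ) (R + ρ))) =ᶠ[atTop]
      fun R ↦ μ.real (ball (0 : E) 1) * ((R + ρ) ^ (n + 1) - (R - ρ) ^ (n + 1)) := by
    filter_upwards [eventually_gt_atTop ρ] with R hR
    rw [measureReal_closedAnnulus μ (sub_pos.2 hR) (by linarith), hn, mul_comm]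
  simp only [hn, Nat.cast_add, Nat.cast_one, add_sub_cancel_right, rpow_natCast]
  exact hvol.trans_isTheta
    ((isTheta_const_mul_left hball).2 (isTheta_add_pow_succ_sub_sub_pow_succ hρ n))

end Annulus

section ShellPotential

variable {E : Type*} [NormedAddCommGroup E] [NormedSpace ℝ E]

lemma one_add_norm_sub_smul_le {b : ℝ} {x y : E} (hy : ‖y‖ ≤ b) (hb : 0 < b) {t : ℝ}
    (ht : t ∈ Icc 1 (1 + (1 + ‖x - y‖) / b)) : 1 + ‖x - t • y‖ ≤ 2 * (1 + ‖x - y‖) := by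
  have hshift : (t - 1) * ‖y‖ ≤ 1 + ‖x - y‖ := by
    calc (t - 1) * ‖y‖ ≤ (1 + ‖x - y‖) / b * b := by
          gcongr
          linarith [ht.2]
      _ = 1 + ‖x - y‖ := by field_simp
  calc 1 + ‖x - t • y‖ = 1 + ‖(x - y) - (t - 1) • y‖ := by congr 2; module
    _ ≤ 1 + (‖x - y‖ + ‖(t - 1) • y‖) := by gcongr; exact norm_sub_le _ _
    _ = 1 + (‖x - y‖ + (t - 1) * ‖y‖) := by
        rw [norm_smul, norm_of_nonneg (sub_nonneg.2 ht.1)]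
    _ ≤ _ := by linarith

-- Dilating `y` by up to `1 + (1 + ‖x - y‖) / b` at most doubles `1 + ‖x - y‖`. Averaging over these
-- dilations trades the exponent `r` for `r + 1`, and the new kernel is integrable for
-- `r > finrank ℝ E - 1`.
lemma one_add_norm_sub_rpow_neg_le_lintegral {r b : ℝ} (hr : 0 ≤ r + 1) (hb : 0 < b) (x : E)
    {y : E} (hy : ‖y‖ ≤ b) :
    ENNReal.ofReal ((1 + ‖x - y‖) ^ (-r)) ≤ .ofReal (2 ^ (r + 1) * b) *
      ∫⁻ t in Ici (1 : ℝ), .ofReal ((1 + ‖x - t • y‖) ^ (-(r + 1))) := by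
  set A := 1 + ‖x - y‖
  have hA : 0 < A := by positivity
  calc ENNReal.ofReal (A ^ (-r))
      = .ofReal (2 ^ (r + 1) * b) * (.ofReal ((2 * A) ^ (-(r + 1))) * .ofReal (A / b)) := by
        rw [← ENNReal.ofReal_mul (by positivity), ← ENNReal.ofReal_mul (by positivity),
          mul_rpow zero_le_two hA.le, rpow_neg zero_le_two, show -r = -(r + 1) + 1 by ring,
          rpow_add_one hA.ne']
        field_simp
    _ = .ofReal (2 ^ (r + 1) * b) *
          ∫⁻ _ in Icc 1 (1 + A / b), .ofReal ((2 * A) ^ (-(r + 1))) := by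
        rw [setLIntegral_const, Real.volume_Icc, add_sub_cancel_left]
    _ ≤ .ofReal (2 ^ (r + 1) * b) *
          ∫⁻ t in Icc 1 (1 + A / b), .ofReal ((1 + ‖x - t • y‖) ^ (-(r + 1))) := by
        gcongr _ * ?_
        refine setLIntegral_mono' measurableSet_Icc fun t ht ↦ ENNReal.ofReal_le_ofReal ?_
        exact rpow_le_rpow_of_nonpos (by positivity) (one_add_norm_sub_smul_le hy hb ht)
          (by linarith)
    _ ≤ _ := by
        gcongr _ * ?_
        exact lintegral_mono_set Icc_subset_Ici_self

variable [FiniteDimensional ℝ E] {a b : ℝ}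

lemma lintegral_inv_pow_mul_indicator_closedAnnulus_le [Nontrivial E] (ha : 0 < a) (hab : a ≤ b)
    (v : E) :
    ∫⁻ t in Ici (1 : ℝ), .ofReal (t ^ finrank ℝ E)⁻¹ *
      (closedAnnulus E a b).indicator 1 (t⁻¹ • v) ≤ ENNReal.ofReal ((b - a) / a) := by
  have hb : 0 < b := ha.trans_le hab
  rcases eq_or_ne v 0 with rfl | hv
  · simp [closedAnnulus, ha.not_ge]
  have : 0 < ‖v‖ := norm_pos_iff.2 hv
  have hpoint (t : ℝ) (ht : 1 ≤ t) :
      .ofReal (t ^ finrank ℝ E)⁻¹ * (closedAnnulus E a b).indicator 1 (t⁻¹ • v) ≤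
        (Icc (‖v‖ / b) (‖v‖ / a)).indicator (fun _ ↦ ENNReal.ofReal (b / ‖v‖)) t := by
    by_cases h : t⁻¹ • v ∈ closedAnnulus E a b
    · have htI := (inv_smul_mem_closedAnnulus_iff ha hb (zero_lt_one.trans_le ht) v).1 h
      rw [indicator_of_mem h, indicator_of_mem htI, Pi.one_apply, mul_one, ← inv_div]
      exact ENNReal.ofReal_le_ofReal (inv_anti₀ (by positivity)
        (htI.1.trans (le_self_pow₀ ht finrank_pos.ne')))
    · simp [h]
  calc ∫⁻ t in Ici (1 : ℝ), .ofReal (t ^ finrank ℝ E)⁻¹ *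
        (closedAnnulus E a b).indicator 1 (t⁻¹ • v)
      ≤ ∫⁻ t in Ici (1 : ℝ), (Icc (‖v‖ / b) (‖v‖ / a)).indicator
          (fun _ ↦ ENNReal.ofReal (b / ‖v‖)) t := setLIntegral_mono' measurableSet_Ici hpoint
    _ ≤ ∫⁻ t, (Icc (‖v‖ / b) (‖v‖ / a)).indicator (fun _ ↦ ENNReal.ofReal (b / ‖v‖)) t :=
        setLIntegral_le_lintegral _ _
    _ = ENNReal.ofReal ((b - a) / a) := by
        rw [lintegral_indicator_const measurableSet_Icc, Real.volume_Icc,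
          ← ENNReal.ofReal_mul (by positivity)]
        congr 1
        field_simp

variable [MeasurableSpace E] [BorelSpace E] (μ : Measure E) [μ.IsAddHaarMeasure]

lemma lintegral_comp_smul_of_pos {F : E → ℝ≥0∞} (hF : Measurable F) {t : ℝ} (ht : 0 < t) :
    ∫⁻ y, F (t • y) ∂μ = .ofReal (t ^ finrank ℝ E)⁻¹ * ∫⁻ v, F v ∂μ := by
  rw [← lintegral_map hF (measurable_const_smul t), Measure.map_addHaar_smul μ ht.ne',
    lintegral_smul_measure, abs_of_pos (by positivity), smul_eq_mul]

lemma setLIntegral_comp_smul_of_pos {F : E → ℝ≥0∞} (hF : Measurable F) {S : Set E}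
    (hS : MeasurableSet S) {t : ℝ} (ht : 0 < t) :
    ∫⁻ y in S, F (t • y) ∂μ =
      ∫⁻ v, .ofReal (t ^ finrank ℝ E)⁻¹ * S.indicator 1 (t⁻¹ • v) * F v ∂μ := by
  have hG : Measurable fun v ↦ S.indicator 1 (t⁻¹ • v) * F v :=
    ((measurable_one.indicator hS).comp (measurable_const_smul _)).mul hF
  simp_rw [mul_assoc]
  rw [lintegral_const_mul _ hG, ← lintegral_comp_smul_of_pos μ hG ht, ← lintegral_indicator hS]
  refine lintegral_congr fun y ↦ ?_
  rw [inv_smul_smul₀ ht.ne']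
  by_cases hy : y ∈ S <;> simp [hy]

lemma setLIntegral_closedAnnulus_lintegral_smul_le [Nontrivial E] {F : E → ℝ≥0∞}
    (hF : Measurable F) (ha : 0 < a) (hab : a ≤ b) :
    ∫⁻ y in closedAnnulus E a b, (∫⁻ t in Ici (1 : ℝ), F (t • y)) ∂μ ≤
      .ofReal ((b - a) / a) * ∫⁻ v, F v ∂μ := by
  set S := closedAnnulus E a b
  have hS : MeasurableSet S := measurableSet_closedAnnulus
  have hχ : Measurable (S.indicator (1 : E → ℝ≥0∞)) := measurable_one.indicator hS
  calc ∫⁻ y in S, (∫⁻ t in Ici (1 : ℝ), F (t • y)) ∂μ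
      = ∫⁻ t in Ici (1 : ℝ), ∫⁻ y in S, F (t • y) ∂μ := lintegral_lintegral_swap
        (hF.comp (measurable_snd.smul measurable_fst)).aemeasurable
    _ = ∫⁻ t in Ici (1 : ℝ), ∫⁻ v,
          .ofReal (t ^ finrank ℝ E)⁻¹ * S.indicator 1 (t⁻¹ • v) * F v ∂μ :=
        setLIntegral_congr_fun measurableSet_Ici fun t ht ↦
          setLIntegral_comp_smul_of_pos μ hF hS (zero_lt_one.trans_le ht)
    _ = ∫⁻ v, (∫⁻ t in Ici (1 : ℝ),
          .ofReal (t ^ finrank ℝ E)⁻¹ * S.indicator 1 (t⁻¹ • v) * F v) ∂μ := by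
        refine lintegral_lintegral_swap (Measurable.aemeasurable ?_)
        exact ((by fun_prop : Measurable _).mul
          (hχ.comp (measurable_fst.inv.smul measurable_snd))).mul (hF.comp measurable_snd)
    _ ≤ ∫⁻ v, .ofReal ((b - a) / a) * F v ∂μ := by
        refine lintegral_mono fun v ↦ ?_
        rw [lintegral_mul_const _ (by fun_prop)]
        gcongr
        exact lintegral_inv_pow_mul_indicator_closedAnnulus_le ha hab v
    _ = _ := lintegral_const_mul _ hF

lemma setLIntegral_closedAnnulus_one_add_norm_rpow_neg_le [Nontrivial E] {r : ℝ}
    (hr : 0 ≤ r + 1) (ha : 0 < a) (hab : a ≤ b) (x : E) :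
    ∫⁻ y in closedAnnulus E a b, .ofReal ((1 + ‖x - y‖) ^ (-r)) ∂μ ≤
      .ofReal (2 ^ (r + 1) * (b * ((b - a) / a))) *
        ∫⁻ z, .ofReal ((1 + ‖z‖) ^ (-(r + 1))) ∂μ := by
  have hb : 0 < b := ha.trans_le hab
  set J : E → ℝ≥0∞ := fun z ↦ .ofReal ((1 + ‖z‖) ^ (-(r + 1)))
  calc ∫⁻ y in closedAnnulus E a b, .ofReal ((1 + ‖x - y‖) ^ (-r)) ∂μ
      ≤ ∫⁻ y in closedAnnulus E a b, .ofReal (2 ^ (r + 1) * b) *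
          (∫⁻ t in Ici (1 : ℝ), J (x - t • y)) ∂μ :=
        setLIntegral_mono' measurableSet_closedAnnulus fun y hy ↦
          one_add_norm_sub_rpow_neg_le_lintegral hr hb x hy.2
    _ = .ofReal (2 ^ (r + 1) * b) * ∫⁻ y in closedAnnulus E a b,
          (∫⁻ t in Ici (1 : ℝ), J (x - t • y)) ∂μ :=
        lintegral_const_mul' _ _ ENNReal.ofReal_ne_top
    _ ≤ .ofReal (2 ^ (r + 1) * b) * (.ofReal ((b - a) / a) * ∫⁻ v, J (x - v) ∂μ) := by
        gcongr
        exact setLIntegral_closedAnnulus_lintegral_smul_le μ (by fun_prop) ha hab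
    _ = _ := by
        rw [lintegral_sub_left_eq_self, ← mul_assoc, ← ENNReal.ofReal_mul (by positivity),
          mul_assoc]

lemma setLIntegral_norm_sub_rpow_neg_le {r : ℝ} (hr : 0 ≤ r) (S : Set E) (x : E) :
    ∫⁻ y in S, .ofReal (‖x - y‖ ^ (-r)) ∂μ ≤
      ∫⁻ z in ball 0 1, .ofReal (‖z‖ ^ (-r)) ∂μ +
        .ofReal (2 ^ r) * ∫⁻ y in S, .ofReal ((1 + ‖x - y‖) ^ (-r)) ∂μ := by
  set k : E → ℝ≥0∞ := (ball 0 1).indicator fun z ↦ .ofReal (‖z‖ ^ (-r))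
  have hk : Measurable k := (by fun_prop : Measurable _).indicator measurableSet_ball
  have hpoint (z : E) :
      ENNReal.ofReal (‖z‖ ^ (-r)) ≤ k z + .ofReal (2 ^ r) * .ofReal ((1 + ‖z‖) ^ (-r)) := by
    by_cases hz : z ∈ ball 0 1
    · simp [k, indicator_of_mem hz]
    · rw [← ENNReal.ofReal_mul (by positivity)]
      exact le_add_left (ENNReal.ofReal_le_ofReal
        (rpow_neg_le_two_rpow_mul hr (by simpa using hz)))
  calc ∫⁻ y in S, .ofReal (‖x - y‖ ^ (-r)) ∂μ
      ≤ ∫⁻ y in S, (k (x - y) + .ofReal (2 ^ r) * .ofReal ((1 + ‖x - y‖) ^ (-r))) ∂μ :=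
        lintegral_mono fun y ↦ hpoint (x - y)
    _ = ∫⁻ y in S, k (x - y) ∂μ +
          .ofReal (2 ^ r) * ∫⁻ y in S, .ofReal ((1 + ‖x - y‖) ^ (-r)) ∂μ := by
        rw [lintegral_add_left (by fun_prop), lintegral_const_mul' _ _ ENNReal.ofReal_ne_top]
    _ ≤ _ := by
        gcongr ?_ + _
        refine (setLIntegral_le_lintegral _ _).trans_eq ?_
        rw [lintegral_sub_left_eq_self, lintegral_indicator measurableSet_ball]

lemma exists_setLIntegral_shell_norm_sub_rpow_neg_le [Nontrivial E] {r : ℝ}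
    (hr : (finrank ℝ E : ℝ) - 1 < r) (hr' : r < finrank ℝ E) {ρ : ℝ} (hρ : 0 ≤ ρ) :
    ∃ C : ℝ≥0∞, C ≠ ⊤ ∧ ∀ᶠ R : ℝ in atTop, ∀ x : E,
      ∫⁻ y in closedAnnulus E (R - ρ) (R + ρ), .ofReal (‖x - y‖ ^ (-r)) ∂μ ≤ C := by
  have hr₀ : 0 ≤ r := le_trans (sub_nonneg.2 (Nat.one_le_cast.2 finrank_pos)) hr.le
  set I : ℝ≥0∞ := ∫⁻ z in ball (0 : E) 1, .ofReal (‖z‖ ^ (-r)) ∂μ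
  set J : ℝ≥0∞ := ∫⁻ z : E, .ofReal ((1 + ‖z‖) ^ (-(r + 1))) ∂μ
  have hI : I ≠ ⊤ := (integrableOn_ball_norm_rpow_neg μ hr').lintegral_lt_top.ne
  have hJ : J ≠ ⊤ := (finite_integral_one_add_norm (by linarith)).ne
  refine ⟨I + .ofReal (2 ^ r) * (.ofReal (2 ^ (r + 1) * (6 * ρ)) * J), by finiteness, ?_⟩
  filter_upwards [eventually_ge_atTop (2 * ρ), eventually_gt_atTop ρ] with R hR hR' x
  have hratio : (R + ρ) * ((R + ρ - (R - ρ)) / (R - ρ)) ≤ 6 * ρ := by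
    rw [← mul_div_assoc, div_le_iff₀ (sub_pos.2 hR')]
    nlinarith
  refine (setLIntegral_norm_sub_rpow_neg_le μ hr₀ _ x).trans ?_
  gcongr
  refine (setLIntegral_closedAnnulus_one_add_norm_rpow_neg_le μ (by linarith) (sub_pos.2 hR')
    (by linarith) x).trans ?_
  gcongr

end ShellPotential

section RieszEnergy

variable {E : Type*} [NormedAddCommGroup E] {g : E → ℝ}

lemma abs_rpow_mul_abs_rpow_div_le (hg : ∀ x, |g x| ≤ 1) {q κ ε M : ℝ} (hq : 0 < q) (hκ : 0 < κ)
    (hε : 0 ≤ ε) {x y : E} (hxy : ‖x - y‖ ≤ M) :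
    |g x| ^ q * |g y| ^ q / ‖x - y‖ ^ κ ≤ M ^ ε * ‖x - y‖ ^ (-(κ + ε)) := by
  rcases (norm_nonneg (x - y)).eq_or_lt' with h | h
  · have hM : 0 ≤ M := (norm_nonneg _).trans hxy
    rw [h, zero_rpow hκ.ne', div_zero]
    positivity
  · have hone (z : E) : |g z| ^ q ≤ 1 := rpow_le_one (abs_nonneg _) (hg z) hq.le
    calc |g x| ^ q * |g y| ^ q / ‖x - y‖ ^ κ ≤ 1 / ‖x - y‖ ^ κ := by
          gcongr
          exact mul_le_one₀ (hone x) (by positivity) (hone y)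
      _ = ‖x - y‖ ^ ε * ‖x - y‖ ^ (-(κ + ε)) := by
          rw [← rpow_add h, one_div, ← rpow_neg h.le]
          ring_nf
      _ ≤ M ^ ε * ‖x - y‖ ^ (-(κ + ε)) := by gcongr

lemma enorm_integral_rpow_mul_rpow_div_le [MeasurableSpace E] (μ : Measure E)
    (hg : ∀ x, |g x| ≤ 1) {S : Set E} (hS : MeasurableSet S) (hgS : ∀ x ∉ S, g x = 0) {M : ℝ}
    (hM : ∀ x ∈ S, ‖x‖ ≤ M) {q κ ε : ℝ} (hq : 0 < q) (hκ : 0 < κ) (hε : 0 ≤ ε) {C : ℝ≥0∞}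
    (hC : ∀ x, ∫⁻ y in S, .ofReal (‖x - y‖ ^ (-(κ + ε))) ∂μ ≤ C) :
    ‖∫ x, ∫ y, |g x| ^ q * |g y| ^ q / ‖x - y‖ ^ κ ∂μ ∂μ‖ₑ ≤
      .ofReal ((2 * M) ^ ε) * C * μ S := by
  have hgq (x : E) (hx : x ∉ S) : |g x| ^ q = 0 := by rw [hgS x hx, abs_zero, zero_rpow hq.ne']
  have hrestrict : ∫ x, ∫ y, |g x| ^ q * |g y| ^ q / ‖x - y‖ ^ κ ∂μ ∂μ =
      ∫ x in S, ∫ y in S, |g x| ^ q * |g y| ^ q / ‖x - y‖ ^ κ ∂μ ∂μ := by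
    rw [← setIntegral_eq_integral_of_forall_compl_eq_zero (s := S) fun x hx ↦ by simp [hgq x hx]]
    refine integral_congr_ae (.of_forall fun x ↦ ?_)
    exact (setIntegral_eq_integral_of_forall_compl_eq_zero fun y hy ↦ by simp [hgq y hy]).symm
  rw [hrestrict]
  calc ‖∫ x in S, ∫ y in S, |g x| ^ q * |g y| ^ q / ‖x - y‖ ^ κ ∂μ ∂μ‖ₑ
      ≤ ∫⁻ x in S, ∫⁻ y in S, ‖|g x| ^ q * |g y| ^ q / ‖x - y‖ ^ κ‖ₑ ∂μ ∂μ :=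
        enorm_integral_integral_le _ _ _
    _ ≤ ∫⁻ x in S, ∫⁻ y in S,
          .ofReal ((2 * M) ^ ε) * .ofReal (‖x - y‖ ^ (-(κ + ε))) ∂μ ∂μ := by
        refine setLIntegral_mono' hS fun x hx ↦ setLIntegral_mono' hS fun y hy ↦ ?_
        have hxy : ‖x - y‖ ≤ 2 * M := by linarith [norm_sub_le x y, hM x hx, hM y hy]
        rw [Real.enorm_of_nonneg (by positivity), ← ENNReal.ofReal_mul' (by positivity)]
        exact ENNReal.ofReal_le_ofReal (abs_rpow_mul_abs_rpow_div_le hg hq hκ hε hxy)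
    _ ≤ ∫⁻ _ in S, .ofReal ((2 * M) ^ ε) * C ∂μ := by
        refine lintegral_mono fun x ↦ ?_
        rw [lintegral_const_mul' _ _ ENNReal.ofReal_ne_top]
        gcongr
        exact hC x
    _ = _ := setLIntegral_const _ _

end RieszEnergy

section ShellBump

/-- The radial test function `x ↦ φ (‖x‖ - R)` on `E`: a bump `φ` on the real line transplanted to
the distance from the sphere of radius `R`. It lives on a shell of fixed thickness, and its profile
does not depend on `R`. -/
noncomputable def shellBump {E : Type*} [NormedAddCommGroup E] (φ : ContDiffBump (0 : ℝ)) (R : ℝ)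
    (x : E) : ℝ :=
  φ (‖x‖ - R)

section Normed

variable {E : Type*} [NormedAddCommGroup E] (φ : ContDiffBump (0 : ℝ)) {R : ℝ}

lemma abs_shellBump_le_one (x : E) : |shellBump φ R x| ≤ 1 := by
  rw [shellBump, abs_of_nonneg φ.nonneg]
  exact φ.le_one

lemma abs_shellBump_sub_shellBump_le_one (x y : E) : |shellBump φ R x - shellBump φ R y| ≤ 1 :=
  abs_sub_le_of_nonneg_of_le φ.nonneg φ.le_one φ.nonneg φ.le_one

lemma shellBump_eq_zero {x : E} (hx : x ∉ closedAnnulus E (R - φ.rOut) (R + φ.rOut)) :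
    shellBump φ R x = 0 := by
  refine φ.zero_of_le_dist ?_
  contrapose! hx
  rw [dist_zero_right, Real.norm_eq_abs, abs_lt] at hx
  exact ⟨by linarith, by linarith⟩

lemma shellBump_eq_one {x : E} (hx : x ∈ closedAnnulus E (R - φ.rIn) (R + φ.rIn)) :
    shellBump φ R x = 1 := by
  refine φ.one_of_mem_closedBall ?_
  rw [mem_closedBall_zero_iff, Real.norm_eq_abs, abs_le]
  exact ⟨by linarith [hx.1], by linarith [hx.2]⟩

lemma exists_forall_lipschitzWith_shellBump :
    ∃ L, ∀ R, LipschitzWith L (shellBump φ R : E → ℝ) := by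
  obtain ⟨L, hL⟩ := ContDiff.lipschitzWith_of_hasCompactSupport (𝕂 := ℝ) (n := 1)
    φ.hasCompactSupport φ.contDiff one_ne_zero
  refine ⟨L, fun R ↦ .of_dist_le_mul fun x y ↦ (hL.dist_le_mul _ _).trans ?_⟩
  gcongr
  rw [dist_sub_right, dist_eq_norm x]
  exact dist_norm_norm_le x y

lemma hasCompactSupport_shellBump [ProperSpace E] : HasCompactSupport (shellBump φ R : E → ℝ) :=
  .intro ((isCompact_closedBall (0 : E) (R + φ.rOut)).of_isClosed_subset isClosed_closedAnnulus
    (closedAnnulus_eq_sdiff.trans_subset sdiff_subset)) fun _ ↦ shellBump_eq_zero φ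

end Normed

lemma contDiff_shellBump {E : Type*} [NormedAddCommGroup E] [InnerProductSpace ℝ E]
    (φ : ContDiffBump (0 : ℝ)) {R : ℝ} (hR : φ.rOut < R) {n : ℕ∞} :
    ContDiff ℝ n (shellBump φ R : E → ℝ) := by
  refine contDiff_iff_contDiffAt.2 fun x ↦ ?_
  rcases eq_or_ne x 0 with rfl | hx
  · refine (contDiffAt_const (c := (0 : ℝ))).congr_of_eventuallyEq ?_
    filter_upwards [ball_mem_nhds (0 : E) (sub_pos.2 hR)] with y hy
    exact shellBump_eq_zero φ fun h ↦ (mem_ball_zero_iff.1 hy).not_ge h.1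
  · exact φ.contDiff.contDiffAt.comp x ((contDiffAt_norm ℝ hx).sub contDiffAt_const)

end ShellBump

section ShellAsymptotics

variable {E : Type*} [NormedAddCommGroup E]

lemma measureReal_le_integral_abs_rpow [MeasurableSpace E] [OpensMeasurableSpace E] (μ : Measure E)
    [IsFiniteMeasureOnCompacts μ] {g : E → ℝ} (hg : Continuous g) (hgc : HasCompactSupport g)
    {T : Set E} (hT : ∀ x ∈ T, 1 ≤ |g x|) {γ : ℝ} (hγ : 0 < γ) :
    μ.real T ≤ ∫ x, |g x| ^ γ ∂μ := by
  have hint : Integrable (fun x ↦ |g x| ^ γ) μ :=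
    (hg.abs.rpow_const fun _ ↦ .inr hγ.le).integrable_of_hasCompactSupport
      (hgc.comp_left (g := fun t : ℝ ↦ |t| ^ γ) (by simp [zero_rpow hγ.ne']))
  calc μ.real T ≤ μ.real {x | 1 ≤ |g x| ^ γ} :=
        measureReal_mono (fun x hx ↦ one_le_rpow (hT x hx) hγ.le)
          (hint.measure_ge_lt_top one_pos).ne
    _ = 1 * μ.real {x | 1 ≤ |g x| ^ γ} := (one_mul _).symm
    _ ≤ _ := mul_meas_ge_le_integral_of_nonneg (.of_forall fun _ ↦ by positivity) hint 1

variable [MeasurableSpace E] [BorelSpace E]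

section Normed

variable [NormedSpace ℝ E] [FiniteDimensional ℝ E] [Nontrivial E] (μ : Measure E)
  [μ.IsAddHaarMeasure]

lemma isBigO_of_enorm_le_mul_measure_closedAnnulus {F : ℝ → ℝ} {ρ : ℝ} (hρ : 0 < ρ) {C : ℝ≥0∞}
    (hC : C ≠ ⊤) (hF : ∀ᶠ R in atTop, ‖F R‖ₑ ≤ C * μ (closedAnnulus E (R - ρ) (R + ρ))) :
    F =O[atTop] fun R ↦ R ^ ((finrank ℝ E : ℝ) - 1) := by
  refine .trans (isBigO_of_enorm_le_mul hC ?_) (isTheta_measureReal_closedAnnulus μ hρ).isBigO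
  filter_upwards [hF] with R hR
  rwa [Real.enorm_of_nonneg measureReal_nonneg,
    ofReal_measureReal (measure_closedAnnulus_lt_top μ).ne]

lemma isBigO_integral_norm_fderiv_shellBump (φ : ContDiffBump (0 : ℝ)) {p : ℝ} (hp : 0 < p) :
    (fun R ↦ ∫ x, ‖fderiv ℝ (shellBump φ R) x‖ ^ p ∂μ) =O[atTop]
      fun R ↦ R ^ ((finrank ℝ E : ℝ) - 1) := by
  obtain ⟨L, hL⟩ := exists_forall_lipschitzWith_shellBump (E := E) φ
  refine isBigO_of_enorm_le_mul_measure_closedAnnulus μ φ.rOut_pos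
    (C := .ofReal ((L : ℝ) ^ p)) ENNReal.ofReal_ne_top (.of_forall fun R ↦ ?_)
  exact enorm_integral_norm_fderiv_rpow_le_of_lipschitzWith μ (hL R) isClosed_closedAnnulus
    (fun _ ↦ shellBump_eq_zero φ) hp

lemma isBigO_gagliardo_shellBump (φ : ContDiffBump (0 : ℝ)) {s p : ℝ} (hs₀ : 0 < s) (hs₁ : s < 1)
    (hp : 0 < p) :
    (fun R ↦ ∫ x : E, ∫ y : E, |shellBump φ R x - shellBump φ R y| ^ p /
        ‖x - y‖ ^ ((finrank ℝ E : ℝ) + s * p) ∂μ ∂μ) =O[atTop]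
      fun R ↦ R ^ ((finrank ℝ E : ℝ) - 1) := by
  obtain ⟨L, hL⟩ := exists_forall_lipschitzWith_shellBump (E := E) φ
  set a := (finrank ℝ E : ℝ) + s * p
  have hkernel : ∫⁻ z : E, .ofReal (max 1 ((L : ℝ) ^ p) *
      min (‖z‖ ^ (-(a - p))) (‖z‖ ^ (-a))) ∂μ ≠ ⊤ := by
    refine ((integrable_min_norm_rpow_neg μ ?_ ?_).const_mul _).lintegral_lt_top.ne
    · linarith [mul_lt_of_lt_one_left hp hs₁]
    · linarith [mul_pos hs₀ hp]
  exact isBigO_of_enorm_le_mul_measure_closedAnnulus μ φ.rOut_pos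
    (ENNReal.mul_ne_top (by simp) hkernel)
    (.of_forall fun R ↦ enorm_gagliardo_le_of_lipschitzWith μ (hL R)
      (abs_shellBump_sub_shellBump_le_one φ) measurableSet_closedAnnulus
      (fun _ ↦ shellBump_eq_zero φ) hp a)

lemma isBigO_rieszEnergy_shellBump (φ : ContDiffBump (0 : ℝ)) {q κ ε : ℝ} (hq : 0 < q)
    (hκ : 0 < κ) (hε : 0 ≤ ε) (hκε : (finrank ℝ E : ℝ) - 1 < κ + ε)
    (hκε' : κ + ε < finrank ℝ E) :
    (fun R ↦ ∫ x : E, ∫ y : E,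
        |shellBump φ R x| ^ q * |shellBump φ R y| ^ q / ‖x - y‖ ^ κ ∂μ ∂μ) =O[atTop]
      fun R ↦ R ^ ((finrank ℝ E : ℝ) - 1 + ε) := by
  obtain ⟨C, hC, hpot⟩ :=
    exists_setLIntegral_shell_norm_sub_rpow_neg_le μ hκε hκε' φ.rOut_pos.le
  have henergy : (fun R ↦ ∫ x : E, ∫ y : E,
      |shellBump φ R x| ^ q * |shellBump φ R y| ^ q / ‖x - y‖ ^ κ ∂μ ∂μ) =O[atTop] fun R ↦
        (2 * (R + φ.rOut)) ^ ε * μ.real (closedAnnulus E (R - φ.rOut) (R + φ.rOut)) := by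
    refine isBigO_of_enorm_le_mul hC ?_
    filter_upwards [hpot, eventually_gt_atTop 0] with R hR hR₀
    have hpos : 0 < φ.rOut := φ.rOut_pos
    refine (enorm_integral_rpow_mul_rpow_div_le μ (abs_shellBump_le_one φ)
      measurableSet_closedAnnulus (fun _ ↦ shellBump_eq_zero φ) (fun x hx ↦ hx.2) hq hκ hε
      hR).trans_eq ?_
    rw [enorm_mul, Real.enorm_of_nonneg (by positivity), Real.enorm_of_nonneg measureReal_nonneg,
      ofReal_measureReal (measure_closedAnnulus_lt_top μ).ne]
    ring
  have hdiam : (fun R ↦ 2 * (R + φ.rOut)) =O[atTop] fun R ↦ R :=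
    ((isBigO_refl _ _).add (isLittleO_const_id_atTop φ.rOut).isBigO).const_mul_left 2
  refine henergy.trans (((hdiam.rpow hε (eventually_ge_atTop 0)).mul
    (isTheta_measureReal_closedAnnulus μ φ.rOut_pos).isBigO).congr' .rfl ?_)
  filter_upwards [eventually_gt_atTop 0] with R hR
  rw [← rpow_add hR, add_comm]

end Normed

lemma rpow_isBigO_integral_abs_shellBump_rpow [InnerProductSpace ℝ E] [FiniteDimensional ℝ E]
    [Nontrivial E] (μ : Measure E) [μ.IsAddHaarMeasure] (φ : ContDiffBump (0 : ℝ)) {γ : ℝ}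
    (hγ : 0 < γ) :
    (fun R ↦ R ^ ((finrank ℝ E : ℝ) - 1)) =O[atTop]
      fun R ↦ ∫ x : E, |shellBump φ R x| ^ γ ∂μ := by
  refine (isTheta_measureReal_closedAnnulus μ φ.rIn_pos).isBigO_symm.trans (.of_bound 1 ?_)
  filter_upwards [eventually_gt_atTop φ.rOut] with R hR
  rw [one_mul, norm_of_nonneg measureReal_nonneg]
  refine (measureReal_le_integral_abs_rpow μ (contDiff_shellBump φ hR (n := 0)).continuous
    (hasCompactSupport_shellBump φ) (fun x hx ↦ ?_) hγ).trans (le_abs_self _)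
  rw [shellBump_eq_one φ hx, abs_one]

end ShellAsymptotics

section EuclideanSpace

variable {d : ℕ} [Nontrivial (EuclideanSpace ℝ (Fin d))] (φ : ContDiffBump (0 : ℝ))

lemma isBigO_sobolevSemi_shellBump {s p : ℝ} (hs₀ : 0 < s) (hs₁ : s ≤ 1) (hp : 0 < p) :
    (fun R ↦ sobolevSemi d s p (shellBump φ R)) =O[atTop]
      fun R ↦ R ^ (((d : ℝ) - 1) * (1 / p)) := by
  rcases hs₁.eq_or_lt with rfl | hs₁
  · simp only [sobolevSemi, if_true]
    refine isBigO_rpow_mul_of_isBigO_rpow ?_ (by positivity)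
    simpa only [finrank_euclideanSpace_fin] using
      isBigO_integral_norm_fderiv_shellBump (volume : Measure (EuclideanSpace ℝ (Fin d))) φ hp
  · simp only [sobolevSemi, hs₁.ne, hs₀.ne', if_false]
    refine isBigO_rpow_mul_of_isBigO_rpow ?_ (by positivity)
    simpa only [finrank_euclideanSpace_fin] using
      isBigO_gagliardo_shellBump (volume : Measure (EuclideanSpace ℝ (Fin d))) φ hs₀ hs₁ hp

lemma isBigO_coulombEnergy_shellBump {q α ε : ℝ} (hq : 0 < q) (hα : α < d) (hε : 0 ≤ ε)
    (hαε : α - 1 < ε) (hεα : ε < α) :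
    (fun R ↦ coulombEnergy d q α (shellBump φ R)) =O[atTop] fun R ↦ R ^ ((d : ℝ) - 1 + ε) := by
  simp only [coulombEnergy]
  simpa only [finrank_euclideanSpace_fin] using
    isBigO_rieszEnergy_shellBump (volume : Measure (EuclideanSpace ℝ (Fin d))) φ hq
      (sub_pos.2 hα) hε (by rw [finrank_euclideanSpace_fin]; linarith)
      (by rw [finrank_euclideanSpace_fin]; linarith)

lemma rpow_isBigO_lpNorm_shellBump {γ : ℝ} (hγ : 0 < γ) :
    (fun R ↦ R ^ (((d : ℝ) - 1) * (1 / γ))) =O[atTop]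
      fun R ↦ (∫ x : EuclideanSpace ℝ (Fin d), |shellBump φ R x| ^ γ) ^ (1 / γ) := by
  refine rpow_mul_isBigO_of_rpow_isBigO (.of_forall fun R ↦ ?_) ?_ (by positivity)
  · exact integral_nonneg fun x ↦ by positivity
  · simpa only [finrank_euclideanSpace_fin] using
      rpow_isBigO_integral_abs_shellBump_rpow (volume : Measure (EuclideanSpace ℝ (Fin d))) φ hγ

end EuclideanSpace

lemma exists_mem_Ioo_mul_add_add_mul_lt {n b₁ b₂ c δ : ℝ} (hn : 0 < n) (h : b₁ + b₂ < c)
    (hδ : 0 < δ) : ∃ ε ∈ Ioo 0 δ, n * b₁ + (n + ε) * b₂ < n * c := by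
  have hlim : Tendsto (fun ε ↦ n * b₁ + (n + ε) * b₂) (𝓝 0) (𝓝 (n * b₁ + (n + 0) * b₂)) :=
    (by fun_prop : Continuous fun ε ↦ n * b₁ + (n + ε) * b₂).tendsto 0
  have hlt : n * b₁ + (n + 0) * b₂ < n * c := by
    rw [add_zero, ← mul_add]
    gcongr
  exact (Eventually.and (Ioo_mem_nhdsGT hδ)
    ((hlim.mono_left nhdsWithin_le_nhds).eventually_lt_const hlt)).exists

theorem stmt4_general (d : ℕ) (hd : 2 ≤ d) (s γ p q α β₁ β₂ : ℝ)
    (hs0 : 0 < s) (hs1 : s ≤ 1) (hγ : 0 < γ) (hp : 0 < p) (hq : 0 < q)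
    (hα0 : 0 < α) (hα1 : α ≤ 1) (hβ₁ : 0 ≤ β₁) (hβ₂ : 0 ≤ β₂)
    (hcon : β₁ * γ + β₂ * γ < 1) :
    ¬ ∃ C > 0, ∀ g : EuclideanSpace ℝ (Fin d) → ℝ,
      (∀ x y : EuclideanSpace ℝ (Fin d), ‖x‖ = ‖y‖ → g x = g y) →
      ContDiff ℝ 1 g → HasCompactSupport g →
      (∫ x, |g x| ^ γ) ^ (1 / γ) ≤
        C * sobolevSemi d s p g ^ (β₁ * p) * coulombEnergy d q α g ^ β₂ := by
  rintro ⟨C, hC₀, hC⟩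
  have hd' : (2 : ℝ) ≤ d := mod_cast hd
  have : Nontrivial (EuclideanSpace ℝ (Fin d)) :=
    Module.nontrivial_of_finrank_pos (R := ℝ) (by rw [finrank_euclideanSpace_fin]; lia)
  let φ : ContDiffBump (0 : ℝ) := default
  let g (R : ℝ) : EuclideanSpace ℝ (Fin d) → ℝ := shellBump φ R
  obtain ⟨ε, ⟨hε₀, hεα⟩, hε⟩ := exists_mem_Ioo_mul_add_add_mul_lt (n := (d : ℝ) - 1)
    (by linarith) (by rwa [lt_div_iff₀ hγ, add_mul] : β₁ + β₂ < 1 / γ) hα0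
  have hineq : (fun R ↦ (∫ x, |g R x| ^ γ) ^ (1 / γ)) =O[atTop]
      fun R ↦ sobolevSemi d s p (g R) ^ (β₁ * p) * coulombEnergy d q α (g R) ^ β₂ := by
    refine .of_bound C ((eventually_gt_atTop φ.rOut).mono fun R hR ↦ ?_)
    rw [norm_of_nonneg (by positivity)]
    refine (hC (g R) (fun x y h ↦ by simp only [g, shellBump, h]) (contDiff_shellBump φ hR)
      (hasCompactSupport_shellBump φ)).trans ?_
    rw [mul_assoc]
    gcongr
    exact le_abs_self _
  have hsob := isBigO_rpow_mul_of_isBigO_rpow (isBigO_sobolevSemi_shellBump (d := d) φ hs0 hs1 hp)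
    (mul_nonneg hβ₁ hp.le)
  have hcou := isBigO_rpow_mul_of_isBigO_rpow (isBigO_coulombEnergy_shellBump (d := d) φ hq
    (by linarith) hε₀.le (by linarith) hεα) hβ₂
  refine not_isBigO_rpow_rpow_atTop hε
    (((rpow_isBigO_lpNorm_shellBump φ hγ).trans hineq).trans ((hsob.mul hcou).congr' .rfl ?_))
  filter_upwards [eventually_gt_atTop 0] with R hR
  rw [← rpow_add hR]
  congr 2
  field_simp

theorem stmt4 (d : ℕ) (hd : 2 ≤ d) (s γ p q α β₁ β₂ : ℝ)
    (hs0 : 0 < s) (hs1 : s ≤ 1) (hγ1 : 1 < γ) (hp1 : 1 ≤ p) (hq1 : 1 ≤ q)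
    (hα0 : 0 < α) (hα1 : α ≤ 1) (hβ₁ : 0 < β₁) (hβ₂ : 0 < β₂)
    (heq1 : β₁ * p + 2 * β₂ * q = 1)
    (heq2 : ((d : ℝ) - s * p) * β₁ + ((d : ℝ) + α) * β₂ = d / γ)
    (hD : p * ((d : ℝ) + α) - 2 * q * ((d : ℝ) - s * p) ≠ 0)
    (hcon : β₁ * γ + β₂ * γ < 1) :
    ¬ ∃ C > 0, ∀ g : EuclideanSpace ℝ (Fin d) → ℝ,
      (∀ x y : EuclideanSpace ℝ (Fin d), ‖x‖ = ‖y‖ → g x = g y) →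
      ContDiff ℝ 1 g → HasCompactSupport g →
      (∫ x, |g x| ^ γ) ^ (1 / γ) ≤
        C * sobolevSemi d s p g ^ (β₁ * p) * coulombEnergy d q α g ^ β₂ :=
  stmt4_general d hd s γ p q α β₁ β₂ hs0 hs1 (by linarith) (by linarith) (by linarith) hα0 hα1
    hβ₁.le hβ₂.le hcon
end

section
/- Let d ≥ 2, 0 < s ≤ 1, 1 ≤ p, q < ∞, 0 < α < d, and assume 𝒟 = p(d+α) − 2q(d−sp) > 0. Then there exists a constant C > 0 such that for all ε > 0 small enough with p(d+α−2ε) − 2q(d−sp) > 0, setting γ_ε = q + (q(sp−1)+p)(d−α+2ε)/(sp(d+α−2ε−2) + (d−α+2ε)) and a_ε = p(γ_ε(d+α−2ε) − 2qd)/(γ_ε(p(d+α−2ε) − 2q(d−sp))), for every radial g ∈ C¹_{c,rad}(ℝ^d): ‖g‖_{L^{γ_ε}(ℝ^d)} ≤ C ‖g‖_{Ẇ^{s,p}(ℝ^d)}^{a_ε} ‖ |x|^{−((d−α)/(2q) + ε/q)} g ‖_{L^q(ℝ^d)}^{1−a_ε}. -/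
open MeasureTheory Real

/-!
A radial function that is large at one point `x` is large on a whole thin annulus through `x`, so
its averages near `x` are controlled by global integrals with a gain of a power of `|x|`.

For `s < 1`, the average of `|g|^q` over the ball of radius `ρ` at `x` is at most a multiple of
`|x|^(-(d - 1 - β)) ρ⁻¹ ∫ |y|^(-β) |g|^q`, because radial symmetry spreads the ball over an annulus.
The average of `|g x - g y|^p` is at most a multiple of `ρ^(s p)` times the Gagliardo integral at
`x`. For `s = 1` one averages along the ray through `x` instead. Either way, optimising in `ρ`
bounds `|x|^((d - 1 - β) s p) |g x|^(p + q s p)`, and integrating in `x` controls a weighted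
`L^(p + q s p)` norm by the Sobolev energy and the weighted `L^q` norm. With
`β = (d - α) / 2 + ε`, Hölder's inequality between this norm and the weighted `L^q` norm, with
parameter chosen to cancel the weights, gives the unweighted `L^γ` norm.
-/

open Metric Module Function Set
open scoped ENNReal NNReal

section Averages

variable {α : Type*} [MeasurableSpace α] {μ : Measure α}

theorem laverage_le_rpow_laverage_rpow [IsFiniteMeasure μ] [NeZero μ] {h : α → ℝ≥0∞}
    (hh : AEMeasurable h μ) {p : ℝ} (hp : 1 ≤ p) :
    ⨍⁻ y, h y ∂μ ≤ (⨍⁻ y, h y ^ p ∂μ) ^ p⁻¹ := by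
  have hh' : AEStronglyMeasurable h ((μ Set.univ)⁻¹ • μ) := (hh.smul_measure _).aestronglyMeasurable
  simpa [eLpNorm', laverage] using eLpNorm'_le_eLpNorm'_of_exponent_le one_pos hp _ hh'

theorem le_rpow_laverage_add_rpow_laverage [IsFiniteMeasure μ] [NeZero μ] {f h : α → ℝ≥0∞}
    (hf : AEMeasurable f μ) (hh : AEMeasurable h μ) {c : ℝ≥0∞} {p q : ℝ} (hp : 1 ≤ p) (hq : 1 ≤ q)
    (hc : ∀ᵐ y ∂μ, c ≤ f y + h y) :
    c ≤ (⨍⁻ y, f y ^ q ∂μ) ^ q⁻¹ + (⨍⁻ y, h y ^ p ∂μ) ^ p⁻¹ :=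
  calc c = ⨍⁻ _, c ∂μ := (laverage_const μ c).symm
    _ ≤ ⨍⁻ y, (f y + h y) ∂μ := lintegral_mono_ae (Measure.ae_smul_measure hc _)
    _ = ⨍⁻ y, f y ∂μ + ⨍⁻ y, h y ∂μ := lintegral_add_left' (hf.smul_measure _) _
    _ ≤ _ :=
        add_le_add (laverage_le_rpow_laverage_rpow hf hq) (laverage_le_rpow_laverage_rpow hh hp)

end Averages

theorem rpow_half_le_of_forall_radius_le {G a b : ℝ≥0∞} (ha : a ≠ ∞) (ha0 : a ≠ 0)
    (hb : b ≠ ∞) {p q τ : ℝ} (hp : 0 < p) (hq : 0 < q) (hτ : 0 ≤ τ)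
    (h : ∀ ρ : ℝ, 0 < ρ →
      G ≤ (a / .ofReal ρ) ^ q⁻¹ + (b * .ofReal ρ ^ τ) ^ p⁻¹) :
    (G / 2) ^ (p + q * τ) ≤ a ^ τ * b := by
  obtain rfl | hG0 := eq_or_ne G 0
  · simp [ENNReal.zero_rpow_of_pos (show 0 < p + q * τ by positivity)]
  have hG : G ≠ ∞ := ne_top_of_le_ne_top (by finiteness) (h 1 one_pos)
  set H := G / 2
  have hH0 : H ≠ 0 := by simp [H, hG0]
  have hH : H ≠ ∞ := by finiteness
  have hHq0 : H ^ q ≠ 0 := by simp [hH0, hH]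
  have hHq : H ^ q ≠ ∞ := by finiteness
  -- This radius makes the first term equal to `G / 2`.
  set R := a / H ^ q
  have hR : R ≠ ∞ := by finiteness
  have hR0 : R ≠ 0 := by simp [R, ha0, hHq]
  have hfirst : (a / R) ^ q⁻¹ = H := by
    rw [ENNReal.div_div_cancel ha0 ha, ENNReal.rpow_rpow_inv hq.ne']
  have hsecond : H ≤ (b * R ^ τ) ^ p⁻¹ := by
    have := h R.toReal (ENNReal.toReal_pos hR0 hR)
    rw [ENNReal.ofReal_toReal hR, hfirst, ← ENNReal.add_halves G] at this
    exact (ENNReal.add_le_add_iff_left hH).1 this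
  calc H ^ (p + q * τ) = H ^ p * H ^ (q * τ) := ENNReal.rpow_add_of_nonneg _ _ hp.le (by positivity)
    _ ≤ b * R ^ τ * H ^ (q * τ) := by
        gcongr
        exact (ENNReal.rpow_le_rpow hsecond hp.le).trans_eq (ENNReal.rpow_inv_rpow hp.ne' _)
    _ = (R * H ^ q) ^ τ * b := by
        rw [ENNReal.rpow_mul, ENNReal.mul_rpow_of_nonneg _ _ hτ]; ring
    _ = a ^ τ * b := by rw [ENNReal.div_mul_cancel hHq0 hHq]

open Filter Topology in
theorem rpow_le_of_forall_radius_le {G a b : ℝ≥0∞} (ha : a ≠ ∞) (hb : b ≠ ∞)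
    {p q τ : ℝ} (hp : 0 < p) (hq : 0 < q) (hτ : 0 ≤ τ)
    (h : ∀ ρ : ℝ, 0 < ρ →
      G ≤ (a / .ofReal ρ) ^ q⁻¹ + (b * .ofReal ρ ^ τ) ^ p⁻¹) :
    G ^ (p + q * τ) ≤ 2 ^ (p + q * τ) * (a ^ τ * b) := by
  suffices hhalf : (G / 2) ^ (p + q * τ) ≤ a ^ τ * b by
    have hm : 0 ≤ p + q * τ := by positivity
    calc G ^ (p + q * τ) = 2 ^ (p + q * τ) * (G / 2) ^ (p + q * τ) := by
          rw [← ENNReal.mul_rpow_of_nonneg _ _ hm,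
            ENNReal.mul_div_cancel two_ne_zero ENNReal.ofNat_ne_top]
      _ ≤ _ := by gcongr
  have : (𝓝[>] a).NeBot := nhdsGT_neBot_of_exists_gt ⟨∞, ha.lt_top⟩
  have hlim : Tendsto (fun a' : ℝ≥0∞ => a' ^ τ * b) (𝓝[>] a) (𝓝 (a ^ τ * b)) :=
    (ENNReal.Tendsto.mul_const (ENNReal.continuous_rpow_const.tendsto a) (.inr hb)).mono_left
      nhdsWithin_le_nhds
  refine ge_of_tendsto hlim ?_
  filter_upwards [Ioo_mem_nhdsGT ha.lt_top] with a' ⟨haa', ha'⟩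
  refine rpow_half_le_of_forall_radius_le ha'.ne haa'.ne_bot hb hp hq hτ fun ρ hρ => ?_
  exact (h ρ hρ).trans (by gcongr)

theorem lintegral_lintegral_ball {E : Type*} [NormedAddCommGroup E] [MeasurableSpace E]
    [BorelSpace E] [SecondCountableTopology E] (μ : Measure E) [SFinite μ] [μ.IsAddLeftInvariant]
    {h : E → ℝ≥0∞} (hh : Measurable h) (ρ : ℝ) :
    ∫⁻ z, ∫⁻ y in ball z ρ, h y ∂μ ∂μ = μ (ball 0 ρ) * ∫⁻ y, h y ∂μ := by
  let k : E × E → ℝ≥0∞ := {w | dist w.2 w.1 < ρ}.indicator fun w => h w.2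
  have hk : Measurable k :=
    (hh.comp measurable_snd).indicator (measurableSet_lt (by fun_prop) (by fun_prop))
  calc ∫⁻ z, ∫⁻ y in ball z ρ, h y ∂μ ∂μ
      = ∫⁻ z, ∫⁻ y, k (z, y) ∂μ ∂μ :=
        lintegral_congr fun z => (lintegral_indicator measurableSet_ball _).symm
    _ = ∫⁻ y, ∫⁻ z, k (z, y) ∂μ ∂μ := lintegral_lintegral_swap hk.aemeasurable
    _ = ∫⁻ y, μ (ball 0 ρ) * h y ∂μ := lintegral_congr fun y => by
        have hky (z : E) : k (z, y) = (ball y ρ).indicator (fun _ => h y) z := by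
          simp only [k, Set.indicator, Set.mem_ofPred_eq, mem_ball, dist_comm]
        simp_rw [hky]
        rw [lintegral_indicator measurableSet_ball, setLIntegral_const, mul_comm,
          ← measure_preimage_add μ y (ball y ρ), preimage_add_ball, sub_self]
    _ = μ (ball 0 ρ) * ∫⁻ y, h y ∂μ := lintegral_const_mul _ hh

section AnnulusVolume

variable {E : Type*} [NormedAddCommGroup E] [NormedSpace ℝ E] [FiniteDimensional ℝ E]
  [MeasurableSpace E] [BorelSpace E] [Nontrivial E]

theorem pow_mul_le_measure_annulus (μ : Measure E) [μ.IsAddHaarMeasure] {r ρ : ℝ} (hr : 0 ≤ r)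
    (hρ : 0 ≤ ρ) :
    .ofReal (r ^ (finrank ℝ E - 1) * ρ) * μ (ball 0 1) ≤ μ (ball 0 (r + ρ) \ ball 0 r) := by
  obtain ⟨n, hn⟩ : ∃ n, finrank ℝ E = n + 1 := Nat.exists_eq_add_one.2 finrank_pos
  rw [measure_sdiff (ball_subset_ball (by linarith)) measurableSet_ball.nullMeasurableSet
      measure_ball_lt_top.ne,
    Measure.addHaar_ball μ _ (add_nonneg hr hρ), Measure.addHaar_ball μ _ hr,
    ← ENNReal.sub_mul fun _ _ => measure_ball_lt_top.ne, ← ENNReal.ofReal_sub _ (by positivity), hn,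
    Nat.add_sub_cancel]
  gcongr
  have : r ^ n ≤ (r + ρ) ^ n := by gcongr; linarith
  calc r ^ n * ρ = r ^ n * (r + ρ) - r ^ (n + 1) := by ring
    _ ≤ (r + ρ) ^ n * (r + ρ) - r ^ (n + 1) := by gcongr
    _ = (r + ρ) ^ (n + 1) - r ^ (n + 1) := by ring

end AnnulusVolume

section BallAverages

variable {E : Type*} [NormedAddCommGroup E] [InnerProductSpace ℝ E] [FiniteDimensional ℝ E]
  [MeasurableSpace E] [BorelSpace E]

theorem setLIntegral_ball_eq_of_norm_eq {h : E → ℝ≥0∞} (hrad : FactorsThrough h (‖·‖)) {x x' : E}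
    (hx : ‖x‖ = ‖x'‖) (ρ : ℝ) : ∫⁻ y in ball x ρ, h y = ∫⁻ y in ball x' ρ, h y := by
  let T := (Submodule.span ℝ {x - x'})ᗮ.reflection
  have hT : T ⁻¹' ball x' ρ = ball x ρ := by
    rw [T.preimage_ball, T.symm_apply_eq.2 (Submodule.reflection_sub hx).symm]
  calc ∫⁻ y in ball x ρ, h y = ∫⁻ y in T ⁻¹' ball x' ρ, h (T y) := by
        rw [hT]; exact lintegral_congr fun y => hrad (T.norm_map y).symm
    _ = ∫⁻ y in ball x' ρ, h y := T.measurePreserving.setLIntegral_comp_preimage_emb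
        T.toHomeomorph.measurableEmbedding h _

theorem setLIntegral_ball_le_of_mem_annulus {h : E → ℝ≥0∞} (hrad : FactorsThrough h (‖·‖))
    {x z : E} {ρ : ℝ} (hz : z ∈ ball 0 (‖x‖ + ρ) \ ball 0 ‖x‖) :
    ∫⁻ y in ball x ρ, h y ≤ ∫⁻ y in ball z (2 * ρ), h y := by
  have hxz : ‖x‖ ≤ ‖z‖ := by simpa using hz.2
  have hzρ : ‖z‖ < ‖x‖ + ρ := by simpa using hz.1
  obtain rfl | hz0 := eq_or_ne z 0
  · obtain rfl : x = 0 := by simpa using hxz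
    exact lintegral_mono_set (ball_subset_ball (by linarith))
  replace hz0 : 0 < ‖z‖ := norm_pos_iff.2 hz0
  have hnorm : ‖x‖ = ‖(‖x‖ / ‖z‖) • z‖ := by
    rw [norm_smul, norm_div, norm_norm, norm_norm, div_mul_cancel₀ _ hz0.ne']
  have hdist : dist ((‖x‖ / ‖z‖) • z) z = ‖z‖ - ‖x‖ := by
    rw [dist_eq_norm, show (‖x‖ / ‖z‖) • z - z = (‖x‖ / ‖z‖ - 1) • z by module, norm_smul,
      norm_of_nonpos, neg_sub, sub_mul, one_mul, div_mul_cancel₀ _ hz0.ne']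
    exact sub_nonpos.2 ((div_le_one hz0).2 hxz)
  rw [setLIntegral_ball_eq_of_norm_eq hrad hnorm]
  exact lintegral_mono_set (ball_subset_ball' (by linarith))

variable [Nontrivial E]

theorem pow_mul_setLIntegral_ball_le {h : E → ℝ≥0∞} (hh : Measurable h)
    (hrad : FactorsThrough h (‖·‖)) (x : E) {ρ : ℝ} (hρ : 0 < ρ) :
    .ofReal (‖x‖ ^ (finrank ℝ E - 1)) * ∫⁻ y in ball x ρ, h y ≤
      .ofReal (2 ^ finrank ℝ E * ρ ^ (finrank ℝ E - 1)) * ∫⁻ y, h y := by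
  let A : Set E := ball 0 (‖x‖ + ρ) \ ball 0 ‖x‖
  have hunit : volume (ball (0 : E) 1) ≠ 0 := (measure_ball_pos _ _ one_pos).ne'
  have hmass : .ofReal (‖x‖ ^ (finrank ℝ E - 1) * ρ) * volume (ball (0 : E) 1) *
      ∫⁻ y in ball x ρ, h y ≤ .ofReal ((2 * ρ) ^ finrank ℝ E) * volume (ball (0 : E) 1) *
        ∫⁻ y, h y :=
    calc _ ≤ volume A * ∫⁻ y in ball x ρ, h y := by
          gcongr; exact pow_mul_le_measure_annulus _ (norm_nonneg _) hρ.le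
      _ = ∫⁻ _ in A, ∫⁻ y in ball x ρ, h y := by rw [setLIntegral_const, mul_comm]
      _ ≤ ∫⁻ z in A, ∫⁻ y in ball z (2 * ρ), h y :=
          setLIntegral_mono' (measurableSet_ball.diff measurableSet_ball) fun _ hz =>
            setLIntegral_ball_le_of_mem_annulus hrad hz
      _ ≤ ∫⁻ z, ∫⁻ y in ball z (2 * ρ), h y := setLIntegral_le_lintegral _ _
      _ = _ := by
          rw [lintegral_lintegral_ball volume hh, Measure.addHaar_ball _ _ (by positivity)]
  have hpow : (2 * ρ) ^ finrank ℝ E =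
      2 ^ finrank ℝ E * ρ ^ (finrank ℝ E - 1) * ρ := by
    rw [mul_pow, mul_assoc, pow_sub_one_mul finrank_pos.ne']
  rw [hpow, ENNReal.ofReal_mul (by positivity), ENNReal.ofReal_mul (p := _ * _) (by positivity)]
    at hmass
  have hcancel : ENNReal.ofReal ρ * volume (ball (0 : E) 1) ≠ 0 := by simp [hunit, hρ]
  refine (ENNReal.mul_le_mul_iff_left hcancel (by finiteness)).1 ?_
  convert hmass using 1 <;> ring

end BallAverages

theorem le_ofReal_rpow_mul_enorm_rpow_neg_mul {E : Type*} [NormedAddCommGroup E] {y : E} {R : ℝ}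
    (hR : 0 < R) (hy : ‖y‖ ≤ R) {β : ℝ} (hβ : 0 ≤ β)
    (c : ℝ≥0∞) : c ≤ .ofReal R ^ β * (‖y‖ₑ ^ (-β) * c) := by
  have hone : 1 ≤ ENNReal.ofReal R / ‖y‖ₑ := by
    rw [ENNReal.le_div_iff_mul_le (by simp [hR]) (by simp), one_mul, ← ofReal_norm]
    exact ENNReal.ofReal_le_ofReal hy
  calc c ≤ (.ofReal R / ‖y‖ₑ) ^ β * c := le_mul_of_one_le_left'
        ((ENNReal.one_rpow β).symm.trans_le (ENNReal.rpow_le_rpow hone hβ))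
    _ = _ := by rw [ENNReal.div_rpow_of_nonneg _ _ hβ, div_eq_mul_inv, ENNReal.rpow_neg, mul_assoc]

section WeightedBallAverages

variable {E : Type*} [NormedAddCommGroup E] [InnerProductSpace ℝ E] [FiniteDimensional ℝ E]
  [MeasurableSpace E] [BorelSpace E] [Nontrivial E]

theorem setLIntegral_ball_le_max {h : E → ℝ≥0∞} (hh : Measurable h)
    (hrad : FactorsThrough h (‖·‖)) (x : E) {ρ : ℝ} (hρ : 0 < ρ) :
    ∫⁻ y in ball x ρ, h y ≤
      .ofReal (2 ^ finrank ℝ E * (ρ / max ‖x‖ ρ) ^ (finrank ℝ E - 1)) * ∫⁻ y, h y := by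
  obtain hx | hx := le_total ‖x‖ ρ
  · rw [max_eq_right hx, div_self hρ.ne', one_pow, mul_one]
    calc _ ≤ ∫⁻ y, h y := setLIntegral_le_lintegral _ _
      _ ≤ _ := le_mul_of_one_le_left' (ENNReal.one_le_ofReal.2 (one_le_pow₀ one_le_two))
  · have hpos : 0 < ‖x‖ ^ (finrank ℝ E - 1) := pow_pos (hρ.trans_le hx) _
    rw [max_eq_left hx, div_pow, mul_div_assoc', ENNReal.ofReal_div_of_pos hpos,
      ← ENNReal.mul_div_right_comm, ENNReal.le_div_iff_mul_le (.inl (ENNReal.ofReal_pos.2 hpos).ne')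
        (.inl (by finiteness)), mul_comm]
    exact pow_mul_setLIntegral_ball_le hh hrad x hρ

theorem rpow_mul_two_pow_mul_div_pow_le {n : ℕ} (hn₀ : 0 < n) {r M ρ β : ℝ} (hr : 0 < r)
    (hrM : r ≤ M) (hρ : 0 ≤ ρ) (hβ : β ≤ n - 1) :
    (2 * M) ^ β * (2 ^ n * (ρ / M) ^ (n - 1)) ≤
      4 ^ n * ρ ^ (n - 1) * r ^ (-(n - 1 - β) : ℝ) := by
  have hM : 0 < M := hr.trans_le hrM
  calc (2 * M) ^ β * (2 ^ n * (ρ / M) ^ (n - 1))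
      = 2 ^ β * 2 ^ n * ρ ^ (n - 1) * (M ^ β / M ^ (n - 1)) := by
        rw [mul_rpow zero_le_two hM.le, div_pow]; ring
    _ = 2 ^ β * 2 ^ n * ρ ^ (n - 1) * M ^ (-(n - 1 - β) : ℝ) := by
        rw [← rpow_natCast M, ← rpow_sub hM, Nat.cast_pred hn₀, neg_sub]
    _ ≤ 2 ^ (n : ℝ) * 2 ^ n * ρ ^ (n - 1) * r ^ (-(n - 1 - β) : ℝ) := by
        gcongr ?_ * _ * _ * ?_
        · exact rpow_le_rpow_of_exponent_le one_le_two (by linarith)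
        · exact rpow_le_rpow_of_nonpos hr hrM (by linarith)
    _ = 4 ^ n * ρ ^ (n - 1) * r ^ (-(n - 1 - β) : ℝ) := by
        rw [rpow_natCast, ← mul_pow]; norm_num

theorem setLIntegral_ball_le_weighted {h : E → ℝ≥0∞} (hh : Measurable h)
    (hrad : FactorsThrough h (‖·‖)) {β : ℝ} (hβ₀ : 0 ≤ β) (hβ₁ : β ≤ finrank ℝ E - 1)
    {x : E} (hx : x ≠ 0) {ρ : ℝ} (hρ : 0 < ρ) :
    ∫⁻ y in ball x ρ, h y ≤
      .ofReal (4 ^ finrank ℝ E * ρ ^ (finrank ℝ E - 1) * ‖x‖ ^ (-(finrank ℝ E - 1 - β) : ℝ)) *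
        ∫⁻ y, ‖y‖ₑ ^ (-β) * h y := by
  set n := finrank ℝ E
  set M := max ‖x‖ ρ
  have : 0 < M := hρ.trans_le (le_max_right _ _)
  have hweight : ∀ y ∈ ball x ρ, h y ≤ .ofReal (2 * M) ^ β * (‖y‖ₑ ^ (-β) * h y) := fun y hy =>
    le_ofReal_rpow_mul_enorm_rpow_neg_mul (by positivity) (by
      calc ‖y‖ ≤ ‖x‖ + ‖y - x‖ := norm_le_norm_add_norm_sub' y x
        _ ≤ M + M :=
            add_le_add (le_max_left _ _) ((mem_ball_iff_norm.1 hy).le.trans (le_max_right _ _))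
        _ = 2 * M := (two_mul M).symm) hβ₀ _
  have hconst : (2 * M) ^ β * (2 ^ n * (ρ / M) ^ (n - 1)) ≤
      4 ^ n * ρ ^ (n - 1) * ‖x‖ ^ (-(n - 1 - β) : ℝ) :=
    rpow_mul_two_pow_mul_div_pow_le finrank_pos (norm_pos_iff.2 hx) (le_max_left _ _) hρ.le hβ₁
  calc ∫⁻ y in ball x ρ, h y
      ≤ ∫⁻ y in ball x ρ, .ofReal (2 * M) ^ β * (‖y‖ₑ ^ (-β) * h y) :=
        setLIntegral_mono' measurableSet_ball hweight
    _ = .ofReal (2 * M) ^ β * ∫⁻ y in ball x ρ, ‖y‖ₑ ^ (-β) * h y :=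
        lintegral_const_mul _ (by fun_prop)
    _ ≤ .ofReal ((2 * M) ^ β) * (.ofReal (2 ^ n * (ρ / M) ^ (n - 1)) *
          ∫⁻ y, ‖y‖ₑ ^ (-β) * h y) := by
        rw [ENNReal.ofReal_rpow_of_pos (by positivity)]
        gcongr
        refine setLIntegral_ball_le_max (by fun_prop) (fun y z hyz => ?_) x hρ
        have : ‖y‖ₑ = ‖z‖ₑ := enorm_eq_iff_norm_eq.2 hyz
        rw [this, hrad hyz]
    _ ≤ _ := by
        rw [← mul_assoc, ← ENNReal.ofReal_mul (by positivity)]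
        gcongr

theorem setLAverage_ball_le_weighted {h : E → ℝ≥0∞} (hh : Measurable h)
    (hrad : FactorsThrough h (‖·‖)) {β : ℝ} (hβ₀ : 0 ≤ β) (hβ₁ : β ≤ finrank ℝ E - 1)
    {x : E} (hx : x ≠ 0) {ρ : ℝ} (hρ : 0 < ρ) :
    ⨍⁻ y in ball x ρ, h y ∂volume ≤
      4 ^ finrank ℝ E / volume (ball (0 : E) 1) * ‖x‖ₑ ^ (-(finrank ℝ E - 1 - β) : ℝ) *
        (∫⁻ y, ‖y‖ₑ ^ (-β) * h y) / .ofReal ρ := by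
  have hpow : ENNReal.ofReal ρ ^ (finrank ℝ E - 1) ≠ 0 := by simp [hρ]
  rw [setLAverage_eq, Measure.addHaar_ball _ _ hρ.le, ENNReal.ofReal_pow hρ.le,
    ← pow_sub_one_mul finrank_pos.ne' (ENNReal.ofReal ρ)]
  calc _ ≤ _ := ENNReal.div_le_div_right (setLIntegral_ball_le_weighted hh hrad hβ₀ hβ₁ hx hρ) _
    _ = .ofReal ρ ^ (finrank ℝ E - 1) * (4 ^ finrank ℝ E * ‖x‖ₑ ^ (-(finrank ℝ E - 1 - β) : ℝ) *
          ∫⁻ y, ‖y‖ₑ ^ (-β) * h y) /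
        (.ofReal ρ ^ (finrank ℝ E - 1) * (volume (ball (0 : E) 1) * .ofReal ρ)) := by
        rw [ENNReal.ofReal_mul (by positivity), ENNReal.ofReal_mul (by positivity),
          ← ENNReal.ofReal_rpow_of_pos (norm_pos_iff.2 hx), ofReal_norm,
          ENNReal.ofReal_pow hρ.le, ENNReal.ofReal_pow (by norm_num), ENNReal.ofReal_ofNat]
        congr 1 <;> ring
    _ = _ := by
        rw [ENNReal.mul_div_mul_left _ _ hpow (by finiteness), div_eq_mul_inv, div_eq_mul_inv,
          div_eq_mul_inv, ENNReal.mul_inv (.inr (by finiteness)) (.inr (by simp [hρ]))]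
        ring

end WeightedBallAverages

section Energies

variable {E F : Type*} [NormedAddCommGroup E] [MeasureSpace E] [NormedAddCommGroup F]

/-- The inner integral of the Gagliardo seminorm of `g`, at the point `x`. -/
noncomputable def gagliardoDensity [NormedSpace ℝ E] (s p : ℝ) (g : E → F) (x : E) : ℝ≥0∞ :=
  ∫⁻ y, ‖g x - g y‖ₑ ^ p / ‖x - y‖ₑ ^ (Module.finrank ℝ E + s * p)

/-- The integral of `|x|^w |g|^q`, a power of the norm of `g` in a power-weighted Lebesgue space. -/
noncomputable def weightedEnergy (w q : ℝ) (g : E → F) : ℝ≥0∞ :=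
  ∫⁻ x, ‖x‖ₑ ^ w * ‖g x‖ₑ ^ q

end Energies

section GagliardoBound

variable {E : Type*} [NormedAddCommGroup E] [InnerProductSpace ℝ E] [FiniteDimensional ℝ E]
  [MeasurableSpace E] [BorelSpace E] {F : Type*} [NormedAddCommGroup F] {g : E → F}
  {s p q β : ℝ}

theorem measurable_gagliardoDensity (hg : StronglyMeasurable g) (s p : ℝ) :
    Measurable (gagliardoDensity s p g) := by
  have hsub : StronglyMeasurable fun z : E × E => g z.1 - g z.2 :=
    (hg.comp_measurable measurable_fst).sub (hg.comp_measurable measurable_snd)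
  refine Measurable.lintegral_prod_right' (f := fun z : E × E =>
    ‖g z.1 - g z.2‖ₑ ^ p / ‖z.1 - z.2‖ₑ ^ (finrank ℝ E + s * p)) ?_
  exact (hsub.enorm.pow_const _).div (by fun_prop)

theorem setLAverage_ball_enorm_sub_rpow_le (g : E → F) (hs : 0 ≤ s) (hp : 0 ≤ p) (x : E) {ρ : ℝ}
    (hρ : 0 < ρ) :
    ⨍⁻ y in ball x ρ, ‖g x - g y‖ₑ ^ p ∂volume ≤
      gagliardoDensity s p g x / volume (ball (0 : E) 1) * .ofReal ρ ^ (s * p) := by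
  set e : ℝ := finrank ℝ E + s * p
  have he : 0 ≤ e := by positivity
  have hρ0 : ENNReal.ofReal ρ ≠ 0 := by simp [hρ]
  have hball : ∫⁻ y in ball x ρ, ‖g x - g y‖ₑ ^ p ≤ .ofReal ρ ^ e * gagliardoDensity s p g x :=
    calc ∫⁻ y in ball x ρ, ‖g x - g y‖ₑ ^ p
        ≤ ∫⁻ y in ball x ρ, .ofReal ρ ^ e * (‖g x - g y‖ₑ ^ p / ‖x - y‖ₑ ^ e) := by
          refine setLIntegral_mono' measurableSet_ball fun y hy => ?_
          rw [div_eq_mul_inv, ← ENNReal.rpow_neg, mul_comm (‖g x - g y‖ₑ ^ p)]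
          exact le_ofReal_rpow_mul_enorm_rpow_neg_mul hρ (mem_ball_iff_norm'.1 hy).le he _
      _ ≤ ∫⁻ y, .ofReal ρ ^ e * (‖g x - g y‖ₑ ^ p / ‖x - y‖ₑ ^ e) := setLIntegral_le_lintegral _ _
      _ = .ofReal ρ ^ e * gagliardoDensity s p g x := lintegral_const_mul' _ _ (by finiteness)
  rw [setLAverage_eq, Measure.addHaar_ball_of_pos _ _ hρ, ENNReal.ofReal_pow hρ.le]
  calc _ ≤ _ := ENNReal.div_le_div_right hball _
    _ = .ofReal ρ ^ finrank ℝ E * (.ofReal ρ ^ (s * p) * gagliardoDensity s p g x) /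
        (.ofReal ρ ^ finrank ℝ E * volume (ball (0 : E) 1)) := by
        rw [ENNReal.rpow_add _ _ hρ0 (by finiteness), ENNReal.rpow_natCast, mul_assoc]
    _ = _ := by
        rw [ENNReal.mul_div_mul_left _ _ (by simp [hρ]) (by finiteness), mul_div_assoc, mul_comm]

variable [Nontrivial E]

theorem enorm_le_rpow_weightedEnergy_add_rpow_gagliardoDensity (hg : StronglyMeasurable g)
    (hrad : FactorsThrough g (‖·‖)) (hs : 0 ≤ s) (hp : 1 ≤ p) (hq : 1 ≤ q) (hβ₀ : 0 ≤ β)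
    (hβ₁ : β ≤ finrank ℝ E - 1) {x : E} (hx : x ≠ 0) {ρ : ℝ} (hρ : 0 < ρ) :
    ‖g x‖ₑ ≤
      (4 ^ finrank ℝ E / volume (ball (0 : E) 1) * ‖x‖ₑ ^ (-(finrank ℝ E - 1 - β) : ℝ) *
          weightedEnergy (-β) q g / .ofReal ρ) ^ q⁻¹ +
        (gagliardoDensity s p g x / volume (ball (0 : E) 1) * .ofReal ρ ^ (s * p)) ^ p⁻¹ := by
  have : NeZero (volume.restrict (ball x ρ)) :=
    ⟨Measure.restrict_eq_zero.not.2 (measure_ball_pos _ _ hρ).ne'⟩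
  have : IsFiniteMeasure (volume.restrict (ball x ρ)) :=
    isFiniteMeasure_restrict.2 measure_ball_lt_top.ne
  calc ‖g x‖ₑ
      ≤ (⨍⁻ y in ball x ρ, ‖g y‖ₑ ^ q ∂volume) ^ q⁻¹ +
          (⨍⁻ y in ball x ρ, ‖g x - g y‖ₑ ^ p ∂volume) ^ p⁻¹ :=
        le_rpow_laverage_add_rpow_laverage hg.enorm.aemeasurable
          (stronglyMeasurable_const.sub hg).enorm.aemeasurable hp hq
          (.of_forall fun y => by simpa using enorm_add_le (g y) (g x - g y))
    _ ≤ _ := by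
        gcongr
        · exact setLAverage_ball_le_weighted (hg.enorm.pow_const q)
            (fun y z h => congrArg (‖·‖ₑ ^ q) (hrad h)) hβ₀ hβ₁ hx hρ
        · exact setLAverage_ball_enorm_sub_rpow_le g hs (by positivity) x hρ

theorem enorm_rpow_mul_rpow_le_gagliardoDensity (hg : StronglyMeasurable g)
    (hrad : FactorsThrough g (‖·‖)) (hs : 0 ≤ s) (hp : 1 ≤ p) (hq : 1 ≤ q) (hβ₀ : 0 ≤ β)
    (hβ₁ : β ≤ finrank ℝ E - 1) (hW : weightedEnergy (-β) q g ≠ ∞) {x : E} (hx : x ≠ 0)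
    (hD : gagliardoDensity s p g x ≠ ∞) :
    ‖x‖ₑ ^ ((finrank ℝ E - 1 - β) * (s * p)) * ‖g x‖ₑ ^ (p + q * (s * p)) ≤
      2 ^ (p + q * (s * p)) *
        ((4 ^ finrank ℝ E / volume (ball (0 : E) 1) * weightedEnergy (-β) q g) ^ (s * p) *
          (gagliardoDensity s p g x / volume (ball (0 : E) 1))) := by
  set κ : ℝ := finrank ℝ E - 1 - β
  set ω := volume (ball (0 : E) 1)
  have hω : ω ≠ 0 := (measure_ball_pos _ _ one_pos).ne'
  have hsp : 0 ≤ s * p := by positivity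
  have hx0 : ‖x‖ₑ ≠ 0 := enorm_ne_zero.2 hx
  set W := weightedEnergy (-β) q g
  have hradius (ρ : ℝ) (hρ : 0 < ρ) : ‖g x‖ₑ ≤
      (4 ^ finrank ℝ E / ω * ‖x‖ₑ ^ (-κ) * W / .ofReal ρ) ^ q⁻¹ +
        (gagliardoDensity s p g x / ω * .ofReal ρ ^ (s * p)) ^ p⁻¹ :=
    enorm_le_rpow_weightedEnergy_add_rpow_gagliardoDensity hg hrad hs hp hq hβ₀ hβ₁ hx hρ
  have hopt := rpow_le_of_forall_radius_le (by finiteness) (by finiteness)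
    (one_pos.trans_le hp) (one_pos.trans_le hq) hsp hradius
  calc ‖x‖ₑ ^ (κ * (s * p)) * ‖g x‖ₑ ^ (p + q * (s * p))
      ≤ ‖x‖ₑ ^ (κ * (s * p)) * (2 ^ (p + q * (s * p)) *
          ((4 ^ finrank ℝ E / ω * ‖x‖ₑ ^ (-κ) * W) ^ (s * p) *
            (gagliardoDensity s p g x / ω))) := by gcongr
    _ = 2 ^ (p + q * (s * p)) *
          ((‖x‖ₑ ^ κ * ‖x‖ₑ ^ (-κ) * (4 ^ finrank ℝ E / ω * W)) ^ (s * p) *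
            (gagliardoDensity s p g x / ω)) := by
        rw [ENNReal.rpow_mul, mul_left_comm, ← mul_assoc (_ ^ (s * p)),
          ← ENNReal.mul_rpow_of_nonneg _ _ hsp]
        congr 3; ring
    _ = _ := by rw [← ENNReal.rpow_add _ _ hx0 (by finiteness)]; simp

theorem weightedEnergy_le_lintegral_gagliardoDensity (hg : StronglyMeasurable g)
    (hrad : FactorsThrough g (‖·‖)) (hs : 0 ≤ s) (hp : 1 ≤ p) (hq : 1 ≤ q) (hβ₀ : 0 ≤ β)
    (hβ₁ : β ≤ finrank ℝ E - 1) (hW : weightedEnergy (-β) q g ≠ ∞)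
    (hD : ∫⁻ x, gagliardoDensity s p g x ≠ ∞) :
    weightedEnergy ((finrank ℝ E - 1 - β) * (s * p)) (p + q * (s * p)) g ≤
      2 ^ (p + q * (s * p)) *
        ((4 ^ finrank ℝ E / volume (ball (0 : E) 1) * weightedEnergy (-β) q g) ^ (s * p) *
          ((∫⁻ x, gagliardoDensity s p g x) / volume (ball (0 : E) 1))) := by
  have hmeas := measurable_gagliardoDensity hg s p
  calc _ ≤ ∫⁻ x, 2 ^ (p + q * (s * p)) *
        ((4 ^ finrank ℝ E / volume (ball (0 : E) 1) * weightedEnergy (-β) q g) ^ (s * p) *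
          (gagliardoDensity s p g x / volume (ball (0 : E) 1))) := by
        refine lintegral_mono_ae ?_
        filter_upwards [ae_lt_top hmeas hD, Measure.ae_ne volume (0 : E)] with x hDx hx
        exact enorm_rpow_mul_rpow_le_gagliardoDensity hg hrad hs hp hq hβ₀ hβ₁ hW hx hDx.ne
    _ = _ := by
        simp_rw [div_eq_mul_inv _ (volume (ball (0 : E) 1))]
        rw [lintegral_const_mul _ (by fun_prop), lintegral_const_mul _ (by fun_prop),
          lintegral_mul_const _ hmeas]

end GagliardoBound

section Polar

variable {E : Type*} [NormedAddCommGroup E] [NormedSpace ℝ E] [FiniteDimensional ℝ E]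
  [MeasurableSpace E] [BorelSpace E] [Nontrivial E] (μ : Measure E) [μ.IsAddHaarMeasure]

theorem lintegral_fun_norm_addHaar {f : ℝ → ℝ≥0∞} (hf : Measurable f) :
    ∫⁻ x, f ‖x‖ ∂μ = finrank ℝ E * μ (ball 0 1) *
      ∫⁻ t in Ioi 0, .ofReal (t ^ (finrank ℝ E - 1)) * f t :=
  calc ∫⁻ x, f ‖x‖ ∂μ = ∫⁻ x : ({0}ᶜ : Set E), f ‖x.1‖ ∂μ.comap (↑) := by
        rw [lintegral_subtype_comap (measurableSet_singleton _).compl fun x => f ‖x‖,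
          restrict_compl_singleton]
    _ = ∫⁻ z, f z.2.1 ∂μ.toSphere.prod (Measure.volumeIoiPow (finrank ℝ E - 1)) := by
        simpa only [homeomorphUnitSphereProd_apply_snd_coe] using
          μ.measurePreserving_homeomorphUnitSphereProd.lintegral_comp
            (f := fun z => f z.2.1) (by fun_prop)
    _ = finrank ℝ E * μ (ball 0 1) * ∫⁻ t, f t.1 ∂Measure.volumeIoiPow (finrank ℝ E - 1) := by
        rw [lintegral_prod _ (by fun_prop)]
        simp only [lintegral_const, μ.toSphere_apply_univ, mul_comm]
    _ = _ := by
        rw [Measure.volumeIoiPow, lintegral_withDensity_eq_lintegral_mul _ (by fun_prop)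
          (by fun_prop)]
        exact congrArg _ (lintegral_subtype_comap measurableSet_Ioi
          fun t : ℝ => .ofReal (t ^ (finrank ℝ E - 1)) * f t)

theorem rpow_mul_setLIntegral_Ioi_le {f : ℝ → ℝ≥0∞} (hf : Measurable f) {β : ℝ}
    (hβ : β ≤ finrank ℝ E - 1) {r : ℝ} (hr : 0 < r) :
    finrank ℝ E * μ (ball 0 1) * (.ofReal r ^ (finrank ℝ E - 1 - β : ℝ) * ∫⁻ t in Ioi r, f t) ≤
      ∫⁻ x, ‖x‖ₑ ^ (-β) * f ‖x‖ ∂μ := by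
  have hpow (t : ℝ) (ht : r < t) : ENNReal.ofReal r ^ (finrank ℝ E - 1 - β : ℝ) ≤
      .ofReal (t ^ (finrank ℝ E - 1)) * .ofReal t ^ (-β) := by
    have ht0 : 0 < t := hr.trans ht
    rw [← rpow_natCast, Nat.cast_pred finrank_pos, ← ENNReal.ofReal_rpow_of_pos ht0,
      ← ENNReal.rpow_add _ _ (by simpa) (by finiteness), ← sub_eq_add_neg]
    exact ENNReal.rpow_le_rpow (ENNReal.ofReal_le_ofReal ht.le) (by linarith)
  simp_rw [← ofReal_norm]
  rw [lintegral_fun_norm_addHaar μ (f := fun t => .ofReal t ^ (-β) * f t) (by fun_prop),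
    ← lintegral_const_mul _ hf]
  refine mul_le_mul_right ?_ _
  calc _ ≤ ∫⁻ t in Ioi r, .ofReal (t ^ (finrank ℝ E - 1)) * (.ofReal t ^ (-β) * f t) :=
        setLIntegral_mono' measurableSet_Ioi fun t ht => by
          rw [← mul_assoc]; gcongr; exact hpow t ht
    _ ≤ _ := lintegral_mono_set (Ioi_subset_Ioi hr.le)

end Polar

section OneDim

variable {F : Type*} [NormedAddCommGroup F] [NormedSpace ℝ F] {u : ℝ → F} {p q : ℝ}

theorem enorm_sub_le_rpow_lintegral_deriv (hu : ContDiff ℝ 1 u) (hp : 1 ≤ p) {r ρ t : ℝ}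
    (ht : t ∈ Ioc r (r + ρ)) :
    ‖u r - u t‖ₑ ≤
      ((∫⁻ y in Ioi r, ‖deriv u y‖ₑ ^ p) * .ofReal ρ ^ (p - 1)) ^ p⁻¹ := by
  have hρ : 0 < ρ := by linarith [ht.1.trans_le ht.2]
  have hρ0 : ENNReal.ofReal ρ ≠ 0 := by simpa
  have hp0 : 0 < p := by positivity
  have : NeZero (volume.restrict (Ioc r (r + ρ))) :=
    ⟨Measure.restrict_eq_zero.not.2 (by simpa)⟩
  have hvol : volume (Ioc r (r + ρ)) = .ofReal ρ := by simp
  have hderiv : Measurable fun y => ‖deriv u y‖ₑ := (hu.continuous_deriv le_rfl).enorm.measurable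
  calc ‖u r - u t‖ₑ ≤ ∫⁻ y in Icc r t, ‖deriv u y‖ₑ := by
        rw [enorm_sub_rev]
        exact enorm_sub_le_lintegral_deriv_of_contDiffOn_Icc hu.contDiffOn ht.1.le
    _ ≤ ∫⁻ y in Ioc r (r + ρ), ‖deriv u y‖ₑ := by
        rw [← setLIntegral_congr Ioc_ae_eq_Icc]
        exact lintegral_mono_set (Ioc_subset_Ioc_right ht.2)
    _ = .ofReal ρ * ⨍⁻ y in Ioc r (r + ρ), ‖deriv u y‖ₑ ∂volume := by
        rw [← hvol, measure_mul_setLAverage _ (by simp)]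
    _ ≤ .ofReal ρ * (⨍⁻ y in Ioc r (r + ρ), ‖deriv u y‖ₑ ^ p ∂volume) ^ p⁻¹ := by
        gcongr
        exact laverage_le_rpow_laverage_rpow hderiv.aemeasurable hp
    _ ≤ .ofReal ρ * ((∫⁻ y in Ioi r, ‖deriv u y‖ₑ ^ p) / .ofReal ρ) ^ p⁻¹ := by
        rw [setLAverage_eq, hvol]
        gcongr
        exact Ioc_subset_Ioi_self
    _ = _ := by
        rw [← ENNReal.rpow_rpow_inv hp0.ne' (.ofReal ρ),
          ← ENNReal.mul_rpow_of_nonneg _ _ (by positivity), ENNReal.rpow_rpow_inv hp0.ne',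
          ENNReal.rpow_sub _ _ hρ0 (by finiteness), ENNReal.rpow_one]
        congr 1
        simp only [div_eq_mul_inv]
        ring

theorem enorm_rpow_le_lintegral_Ioi (hu : ContDiff ℝ 1 u) (hp : 1 ≤ p) (hq : 1 ≤ q) (r : ℝ)
    (ha : ∫⁻ t in Ioi r, ‖u t‖ₑ ^ q ≠ ∞) (hb : ∫⁻ t in Ioi r, ‖deriv u t‖ₑ ^ p ≠ ∞) :
    ‖u r‖ₑ ^ (p + q * (p - 1)) ≤ 2 ^ (p + q * (p - 1)) *
      ((∫⁻ t in Ioi r, ‖u t‖ₑ ^ q) ^ (p - 1) * ∫⁻ t in Ioi r, ‖deriv u t‖ₑ ^ p) := by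
  refine rpow_le_of_forall_radius_le ha hb (by positivity) (by positivity) (by linarith)
    fun ρ hρ => ?_
  have : NeZero (volume.restrict (Ioc r (r + ρ))) :=
    ⟨Measure.restrict_eq_zero.not.2 (by simpa)⟩
  have hvol : volume (Ioc r (r + ρ)) = .ofReal ρ := by simp
  set L := ((∫⁻ y in Ioi r, ‖deriv u y‖ₑ ^ p) * .ofReal ρ ^ (p - 1)) ^ p⁻¹
  have hL : ∀ᵐ t ∂volume.restrict (Ioc r (r + ρ)), ‖u r‖ₑ ≤ ‖u t‖ₑ + L := by
    filter_upwards [ae_restrict_mem measurableSet_Ioc] with t ht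
    calc ‖u r‖ₑ ≤ ‖u t‖ₑ + ‖u r - u t‖ₑ := by simpa using enorm_add_le (u t) (u r - u t)
      _ ≤ ‖u t‖ₑ + L := by gcongr; exact enorm_sub_le_rpow_lintegral_deriv hu hp ht
  calc ‖u r‖ₑ ≤ (⨍⁻ t in Ioc r (r + ρ), ‖u t‖ₑ ^ q ∂volume) ^ q⁻¹ +
        (⨍⁻ _ in Ioc r (r + ρ), L ^ (1 : ℝ) ∂volume) ^ (1 : ℝ)⁻¹ :=
        le_rpow_laverage_add_rpow_laverage hu.continuous.enorm.measurable.aemeasurable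
          aemeasurable_const le_rfl hq hL
    _ ≤ _ := by
        rw [laverage_const, inv_one, ENNReal.rpow_one, ENNReal.rpow_one, setLAverage_eq, hvol]
        gcongr
        exact Ioc_subset_Ioi_self

end OneDim

section RadialDerivative

variable {E F : Type*} [NormedAddCommGroup E] [NormedSpace ℝ E] [NormedAddCommGroup F]
  [NormedSpace ℝ F] {g : E → F}

theorem enorm_deriv_smul_le_enorm_fderiv (hrad : FactorsThrough g (‖·‖)) {e x : E} (he : ‖e‖ = 1)
    (hx : x ≠ 0) (hg : DifferentiableAt ℝ g x) :
    ‖deriv (fun t : ℝ => g (t • e)) ‖x‖‖ₑ ≤ ‖fderiv ℝ g x‖ₑ := by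
  have hr : 0 < ‖x‖ := norm_pos_iff.2 hx
  set v := ‖x‖⁻¹ • x
  have hv : ‖v‖ = 1 := norm_smul_inv_norm hx
  have hxv : ‖x‖ • v = x := smul_inv_smul₀ hr.ne' x
  have hray : HasDerivAt (fun t : ℝ => g (t • v)) (fderiv ℝ g x v) ‖x‖ := by
    have hline : HasDerivAt (fun t : ℝ => t • v) v ‖x‖ := by
      simpa using (hasDerivAt_id ‖x‖).smul_const v
    have hfderiv : HasFDerivAt g (fderiv ℝ g x) (‖x‖ • v) := hxv.symm ▸ hg.hasFDerivAt
    exact hfderiv.comp_hasDerivAt _ hline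
  have heq : (fun t : ℝ => g (t • e)) = fun t => g (t • v) :=
    funext fun t => hrad (by simp [norm_smul, he, hv])
  rw [heq, hray.deriv]
  calc ‖fderiv ℝ g x v‖ₑ ≤ ‖fderiv ℝ g x‖ₑ * ‖v‖ₑ := (fderiv ℝ g x).le_opENorm v
    _ = ‖fderiv ℝ g x‖ₑ := by rw [← ofReal_norm v, hv, ENNReal.ofReal_one, mul_one]

end RadialDerivative

theorem ennreal_rpow_sub_one_mul_self {p : ℝ} (hp : 1 ≤ p) (c : ℝ≥0∞) :
    c ^ (p - 1) * c = c ^ p := by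
  simpa using (ENNReal.rpow_add_of_nonneg (x := c) (p - 1) 1 (by linarith) zero_le_one).symm

theorem mul_rpow_mul_rpow_le_of_le {c R G a b W S K : ℝ≥0∞} {p q κ β : ℝ} (hR₀ : R ≠ 0)
    (hR : R ≠ ∞) (hp : 1 ≤ p) (hq : 1 ≤ q) (ha : c * (R ^ κ * a) ≤ W)
    (hb : c * (R ^ (κ + β) * b) ≤ S) (hG : G ^ (p + q * (p - 1)) ≤ K * (a ^ (p - 1) * b)) :
    c ^ p * (R ^ (κ * p) * G ^ (p + q * p)) ≤ K * (W ^ (p - 1) * S) * (R ^ (-β) * G ^ q) := by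
  have hp1 : 0 ≤ p - 1 := by linarith
  have hRp : R ^ (κ * p) = (R ^ κ) ^ (p - 1) * (R ^ (κ + β) * R ^ (-β)) := by
    rw [← ENNReal.rpow_mul, ← ENNReal.rpow_add _ _ hR₀ hR, ← ENNReal.rpow_add _ _ hR₀ hR]
    ring_nf
  have hGp : G ^ (p + q * p) = G ^ (p + q * (p - 1)) * G ^ q := by
    rw [← ENNReal.rpow_add_of_nonneg _ _ (by positivity) (by positivity)]
    ring_nf
  calc c ^ p * (R ^ (κ * p) * G ^ (p + q * p))
      = (c * R ^ κ) ^ (p - 1) * (c * R ^ (κ + β)) * (R ^ (-β) * G ^ q) *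
          G ^ (p + q * (p - 1)) := by
        rw [← ennreal_rpow_sub_one_mul_self hp, hRp, hGp, ENNReal.mul_rpow_of_nonneg _ _ hp1]
        ring
    _ ≤ (c * R ^ κ) ^ (p - 1) * (c * R ^ (κ + β)) * (R ^ (-β) * G ^ q) *
          (K * (a ^ (p - 1) * b)) := by gcongr
    _ = K * ((c * (R ^ κ * a)) ^ (p - 1) * (c * (R ^ (κ + β) * b))) * (R ^ (-β) * G ^ q) := by
        rw [← mul_assoc c _ a, ENNReal.mul_rpow_of_nonneg _ a hp1]
        ring
    _ ≤ _ := by gcongr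

section GradientBound

variable {E F : Type*} [NormedAddCommGroup E] [NormedSpace ℝ E] [FiniteDimensional ℝ E]
  [MeasureSpace E] [BorelSpace E] [(volume : Measure E).IsAddHaarMeasure] [Nontrivial E]
  [NormedAddCommGroup F] {g : E → F} {p q β r : ℝ} {e : E}

theorem rpow_mul_setLIntegral_ray_le (hg : Continuous g) (hrad : FactorsThrough g (‖·‖))
    (hβ : β ≤ finrank ℝ E - 1) (he : ‖e‖ = 1) (hr : 0 < r) (q : ℝ) :
    finrank ℝ E * volume (ball (0 : E) 1) *
      (.ofReal r ^ (finrank ℝ E - 1 - β : ℝ) * ∫⁻ t in Ioi r, ‖g (t • e)‖ₑ ^ q) ≤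
        weightedEnergy (-β) q g := by
  have hray (x : E) : g (‖x‖ • e) = g x := hrad (by simp [norm_smul, he])
  have hmeas : Measurable fun t : ℝ => ‖g (t • e)‖ₑ ^ q :=
    (hg.comp (by fun_prop)).enorm.measurable.pow_const q
  simpa only [hray, weightedEnergy] using rpow_mul_setLIntegral_Ioi_le volume hmeas hβ hr

variable [NormedSpace ℝ F]

theorem rpow_mul_setLIntegral_deriv_ray_le (hg : ContDiff ℝ 1 g) (hrad : FactorsThrough g (‖·‖))
    (he : ‖e‖ = 1) (hr : 0 < r) (hp : 0 ≤ p) :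
    finrank ℝ E * volume (ball (0 : E) 1) * (.ofReal r ^ (finrank ℝ E - 1 : ℝ) *
      ∫⁻ t in Ioi r, ‖deriv (fun t : ℝ => g (t • e)) t‖ₑ ^ p) ≤ ∫⁻ x, ‖fderiv ℝ g x‖ₑ ^ p := by
  have hdim : 0 ≤ (finrank ℝ E : ℝ) - 1 := by
    rw [← Nat.cast_pred finrank_pos]; positivity
  have hmeas : Measurable fun t : ℝ => ‖deriv (fun t : ℝ => g (t • e)) t‖ₑ ^ p :=
    ((hg.comp (by fun_prop)).continuous_deriv le_rfl).enorm.measurable.pow_const p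
  have hpolar := rpow_mul_setLIntegral_Ioi_le (volume : Measure E) hmeas hdim hr
  rw [sub_zero] at hpolar
  refine hpolar.trans (lintegral_mono_ae ?_)
  filter_upwards [Measure.ae_ne volume (0 : E)] with x hx
  rw [neg_zero, ENNReal.rpow_zero, one_mul]
  gcongr
  exact enorm_deriv_smul_le_enorm_fderiv hrad he hx (hg.differentiable one_ne_zero x)

theorem rpow_mul_enorm_rpow_le_lintegral_fderiv (hg : ContDiff ℝ 1 g)
    (hrad : FactorsThrough g (‖·‖)) (hp : 1 ≤ p) (hq : 1 ≤ q) (hβ : β ≤ finrank ℝ E - 1)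
    (hW : weightedEnergy (-β) q g ≠ ∞) (hS : ∫⁻ x, ‖fderiv ℝ g x‖ₑ ^ p ≠ ∞) {x : E} (hx : x ≠ 0) :
    (finrank ℝ E * volume (ball (0 : E) 1)) ^ p *
        (‖x‖ₑ ^ ((finrank ℝ E - 1 - β) * p) * ‖g x‖ₑ ^ (p + q * p)) ≤
      2 ^ (p + q * (p - 1)) * (weightedEnergy (-β) q g ^ (p - 1) * ∫⁻ x, ‖fderiv ℝ g x‖ₑ ^ p) *
        (‖x‖ₑ ^ (-β) * ‖g x‖ₑ ^ q) := by
  have hr : 0 < ‖x‖ := norm_pos_iff.2 hx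
  have hR : ‖x‖ₑ ≠ 0 := enorm_ne_zero.2 hx
  obtain ⟨e, he⟩ := exists_norm_eq E zero_le_one
  have hu : ContDiff ℝ 1 fun t : ℝ => g (t • e) := hg.comp (by fun_prop)
  have hgx : g x = g (‖x‖ • e) := hrad (by simp [norm_smul, he])
  have hc0 : finrank ℝ E * volume (ball (0 : E) 1) ≠ 0 :=
    mul_ne_zero (by simpa using finrank_pos.ne') (measure_ball_pos _ _ one_pos).ne'
  have htail := rpow_mul_setLIntegral_ray_le hg.continuous hrad hβ he hr q
  have hderiv := rpow_mul_setLIntegral_deriv_ray_le hg hrad he hr (by positivity : 0 ≤ p)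
  rw [ofReal_norm] at htail hderiv
  have hfinite {w : ℝ} {y S : ℝ≥0∞} (hS : S ≠ ∞)
      (hy : finrank ℝ E * volume (ball (0 : E) 1) * (‖x‖ₑ ^ w * y) ≤ S) : y ≠ ∞ :=
    (ENNReal.lt_top_of_mul_ne_top_right
      (ENNReal.lt_top_of_mul_ne_top_right (ne_top_of_le_ne_top hS hy) hc0).ne (by simp [hR])).ne
  rw [hgx]
  exact mul_rpow_mul_rpow_le_of_le hR (by finiteness) hp hq htail (by simpa using hderiv)
    (enorm_rpow_le_lintegral_Ioi hu hp hq ‖x‖ (hfinite hW htail) (hfinite hS hderiv))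

theorem rpow_mul_weightedEnergy_le_lintegral_fderiv (hg : ContDiff ℝ 1 g)
    (hrad : FactorsThrough g (‖·‖)) (hp : 1 ≤ p) (hq : 1 ≤ q) (hβ : β ≤ finrank ℝ E - 1)
    (hW : weightedEnergy (-β) q g ≠ ∞) (hS : ∫⁻ x, ‖fderiv ℝ g x‖ₑ ^ p ≠ ∞) :
    (finrank ℝ E * volume (ball (0 : E) 1)) ^ p *
        weightedEnergy ((finrank ℝ E - 1 - β) * p) (p + q * p) g ≤
      2 ^ (p + q * (p - 1)) *
        (weightedEnergy (-β) q g ^ p * ∫⁻ x, ‖fderiv ℝ g x‖ₑ ^ p) := by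
  have hmeas : Measurable fun x => ‖g x‖ₑ := hg.continuous.enorm.measurable
  calc _ = ∫⁻ x, (finrank ℝ E * volume (ball (0 : E) 1)) ^ p *
          (‖x‖ₑ ^ ((finrank ℝ E - 1 - β) * p) * ‖g x‖ₑ ^ (p + q * p)) :=
        (lintegral_const_mul _ (by fun_prop)).symm
    _ ≤ ∫⁻ y, 2 ^ (p + q * (p - 1)) * (weightedEnergy (-β) q g ^ (p - 1) *
          ∫⁻ x, ‖fderiv ℝ g x‖ₑ ^ p) * (‖y‖ₑ ^ (-β) * ‖g y‖ₑ ^ q) := by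
        refine lintegral_mono_ae ?_
        filter_upwards [Measure.ae_ne volume (0 : E)] with x hx
        exact rpow_mul_enorm_rpow_le_lintegral_fderiv hg hrad hp hq hβ hW hS hx
    _ = 2 ^ (p + q * (p - 1)) * (weightedEnergy (-β) q g ^ (p - 1) *
          ∫⁻ x, ‖fderiv ℝ g x‖ₑ ^ p) * weightedEnergy (-β) q g :=
        lintegral_const_mul _ (by fun_prop)
    _ = _ := by
        rw [← ennreal_rpow_sub_one_mul_self hp]; ring

end GradientBound

section Finiteness

theorem exists_enorm_le_coe_of_hasCompactSupport {X F : Type*} [TopologicalSpace X]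
    [NormedAddCommGroup F] {g : X → F} (hg : Continuous g) (hgc : HasCompactSupport g) :
    ∃ M : ℝ≥0, ∀ x, ‖g x‖ₑ ≤ M := by
  obtain ⟨M, hM⟩ := hgc.exists_bound_of_continuous hg
  refine ⟨M.toNNReal, fun x => ?_⟩
  rw [← ofReal_norm]
  exact ENNReal.ofReal_le_ofReal (hM x)

theorem enorm_sub_rpow_div_le_indicator_mul {X F : Type*} [TopologicalSpace X]
    [NormedAddCommGroup F] (g : X → F) {p : ℝ} (hp : 0 < p) (x y : X) (c : ℝ≥0∞) :
    ‖g x - g y‖ₑ ^ p / c ≤ ((tsupport g).indicator 1 x + (tsupport g).indicator 1 y) *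
      (‖g x - g y‖ₑ ^ p / c) := by
  by_cases hx : x ∈ tsupport g
  · exact le_mul_of_one_le_left' (by simp [hx])
  by_cases hy : y ∈ tsupport g
  · exact le_mul_of_one_le_left' (by simp [hy])
  · simp [image_eq_zero_of_notMem_tsupport hx, image_eq_zero_of_notMem_tsupport hy, hp]

theorem lintegral_lintegral_add_mul_sub {E : Type*} [AddGroup E] [MeasurableSpace E]
    [MeasurableAdd₂ E] [MeasurableNeg E] [MeasurableSub₂ E] (μ : Measure E) [SFinite μ]
    [μ.IsAddRightInvariant] [μ.IsAddLeftInvariant] [μ.IsNegInvariant]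
    {χ k : E → ℝ≥0∞} (hχ : Measurable χ) (hk : Measurable k) :
    ∫⁻ x, ∫⁻ y, (χ x + χ y) * k (x - y) ∂μ ∂μ = 2 * ((∫⁻ x, χ x ∂μ) * ∫⁻ z, k z ∂μ) :=
  calc ∫⁻ x, ∫⁻ y, (χ x + χ y) * k (x - y) ∂μ ∂μ
      = (∫⁻ x, ∫⁻ y, χ x * k (x - y) ∂μ ∂μ) + ∫⁻ x, ∫⁻ y, χ y * k (x - y) ∂μ ∂μ := by
        rw [← lintegral_add_left (by fun_prop)]
        refine lintegral_congr fun x => ?_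
        rw [← lintegral_add_left (by fun_prop)]
        simp only [add_mul]
    _ = (∫⁻ x, χ x * ∫⁻ y, k (x - y) ∂μ ∂μ) + ∫⁻ y, χ y * ∫⁻ x, k (x - y) ∂μ ∂μ := by
        rw [lintegral_lintegral_swap (f := fun x y => χ y * k (x - y)) (by fun_prop)]
        congr 1 <;> exact lintegral_congr fun x => lintegral_const_mul _ (by fun_prop)
    _ = _ := by
        simp_rw [lintegral_sub_left_eq_self k, lintegral_sub_right_eq_self k]
        rw [lintegral_mul_const _ hχ, two_mul]

theorem enorm_sub_le_mul_min_enorm_one {X F : Type*} [SeminormedAddCommGroup X]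
    [NormedAddCommGroup F] {g : X → F} {K M : ℝ≥0} (hg : LipschitzWith K g)
    (hM : ∀ x, ‖g x‖ₑ ≤ M) (x y : X) :
    ‖g x - g y‖ₑ ≤ (K + 2 * M : ℝ≥0) * min ‖x - y‖ₑ 1 := by
  have hlip : ‖g x - g y‖ₑ ≤ K * ‖x - y‖ₑ := by
    simpa only [edist_eq_enorm_sub] using hg x y
  have hbdd : ‖g x - g y‖ₑ ≤ 2 * M :=
    calc ‖g x - g y‖ₑ ≤ ‖g x‖ₑ + ‖g y‖ₑ := enorm_sub_le
      _ ≤ 2 * M := by rw [two_mul]; gcongr <;> apply hM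
  push_cast
  rcases min_cases ‖x - y‖ₑ 1 with ⟨h, -⟩ | ⟨h, -⟩ <;> rw [h]
  · exact hlip.trans (by gcongr; exact le_self_add)
  · rw [mul_one]; exact hbdd.trans le_add_self

variable {E F : Type*} [NormedAddCommGroup E] [NormedSpace ℝ E] [FiniteDimensional ℝ E]
  [NormedAddCommGroup F] {g : E → F} {p q β s σ : ℝ}

section PowerIntegrals

variable [MeasurableSpace E] [BorelSpace E] (μ : Measure E) [μ.IsAddHaarMeasure]

theorem setLIntegral_enorm_rpow_neg_ne_top [Nontrivial E] {S : Set E} (hS : IsCompact S)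
    (hβ : β < finrank ℝ E) : ∫⁻ x in S, ‖x‖ₑ ^ (-β) ∂μ ≠ ∞ := by
  have hint : IntegrableOn (fun x => ‖x‖ ^ (-β)) S μ :=
    (locallyIntegrable_of_norm_le_rpow (C := 1) finrank_pos hβ
      (.of_forall fun x => by simp [abs_of_nonneg, rpow_nonneg])
      (Measurable.aestronglyMeasurable (by fun_prop))).integrableOn_isCompact hS
  refine ne_of_eq_of_ne (lintegral_congr_ae ?_) hint.lintegral_lt_top.ne
  filter_upwards [ae_restrict_of_ae (μ.ae_ne (0 : E))] with x hx
  rw [← ofReal_norm, ENNReal.ofReal_rpow_of_pos (norm_pos_iff.2 hx)]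

theorem setLIntegral_compl_closedBall_enorm_rpow_neg_ne_top (hβ : finrank ℝ E < β) :
    ∫⁻ x in (closedBall (0 : E) 1)ᶜ, ‖x‖ₑ ^ (-β) ∂μ ≠ ∞ := by
  refine ne_top_of_le_ne_top
    (ENNReal.mul_ne_top (by finiteness : (2 : ℝ≥0∞) ^ β ≠ ∞)
      (finite_integral_one_add_norm (μ := μ) hβ).ne) ?_
  calc ∫⁻ x in (closedBall (0 : E) 1)ᶜ, ‖x‖ₑ ^ (-β) ∂μ
      ≤ ∫⁻ x in (closedBall (0 : E) 1)ᶜ, 2 ^ β * .ofReal ((1 + ‖x‖) ^ (-β)) ∂μ := by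
        refine setLIntegral_mono' measurableSet_closedBall.compl fun x hx => ?_
        have hx1 : 1 < ‖x‖ := by simpa using hx
        rw [← ofReal_norm, ENNReal.ofReal_rpow_of_pos (by positivity), ← ENNReal.ofReal_ofNat 2,
          ENNReal.ofReal_rpow_of_pos two_pos, ← ENNReal.ofReal_mul (by positivity)]
        refine ENNReal.ofReal_le_ofReal ?_
        have : 0 < β := (Nat.cast_nonneg _).trans_lt hβ
        calc ‖x‖ ^ (-β) ≤ ((1 + ‖x‖) / 2) ^ (-β) :=
              rpow_le_rpow_of_nonpos (by positivity) (by linarith) (by linarith)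
          _ = 2 ^ β * (1 + ‖x‖) ^ (-β) := by
              rw [div_rpow (by positivity) zero_le_two, rpow_neg zero_le_two, div_inv_eq_mul,
                mul_comm]
    _ ≤ ∫⁻ x, 2 ^ β * .ofReal ((1 + ‖x‖) ^ (-β)) ∂μ := setLIntegral_le_lintegral _ _
    _ = _ := lintegral_const_mul _ (by fun_prop)

theorem lintegral_min_enorm_one_rpow_div_ne_top [Nontrivial E] (hσ : 0 < σ) (hσp : σ < p) :
    ∫⁻ x : E, min ‖x‖ₑ 1 ^ p / ‖x‖ₑ ^ (finrank ℝ E + σ) ∂μ ≠ ∞ := by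
  have hp : 0 ≤ p := by linarith
  have hin := setLIntegral_enorm_rpow_neg_ne_top μ (isCompact_closedBall (0 : E) 1)
    (by linarith : finrank ℝ E + σ - p < finrank ℝ E)
  have hout := setLIntegral_compl_closedBall_enorm_rpow_neg_ne_top μ
    (by linarith : (finrank ℝ E : ℝ) < finrank ℝ E + σ)
  rw [← lintegral_add_compl _ (measurableSet_closedBall (x := (0 : E)) (ε := 1))]
  refine ne_top_of_le_ne_top (ENNReal.add_ne_top.2 ⟨hin, hout⟩) (add_le_add ?_ ?_)
  · refine lintegral_mono_ae ?_
    filter_upwards [ae_restrict_of_ae (μ.ae_ne (0 : E))] with x hx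
    rw [neg_sub, ENNReal.rpow_sub _ _ (enorm_ne_zero.2 hx) (by finiteness)]
    gcongr
    exact min_le_left _ _
  · refine lintegral_mono fun x => ?_
    rw [ENNReal.rpow_neg, ← one_div]
    gcongr
    exact ENNReal.rpow_le_one (min_le_right _ _) hp

end PowerIntegrals

variable [MeasureSpace E] [BorelSpace E] [(volume : Measure E).IsAddHaarMeasure] [Nontrivial E]

theorem weightedEnergy_neg_ne_top (hg : Continuous g) (hgc : HasCompactSupport g)
    (hβ : β < finrank ℝ E) (hq : 0 < q) : weightedEnergy (-β) q g ≠ ∞ := by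
  obtain ⟨M, hM⟩ := exists_enorm_le_coe_of_hasCompactSupport hg hgc
  have hsupp : (tsupport g).indicator (fun x => ‖x‖ₑ ^ (-β) * ‖g x‖ₑ ^ q) =
      fun x => ‖x‖ₑ ^ (-β) * ‖g x‖ₑ ^ q := by
    rw [indicator_eq_self]
    refine fun x hx => subset_tsupport g fun hgx => hx ?_
    simp [hgx, hq]
  rw [weightedEnergy, ← hsupp, lintegral_indicator (isClosed_tsupport g).measurableSet]
  refine ne_top_of_le_ne_top (ENNReal.mul_ne_top (by finiteness : (M : ℝ≥0∞) ^ q ≠ ∞)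
    (setLIntegral_enorm_rpow_neg_ne_top volume hgc hβ)) ?_
  rw [← lintegral_const_mul _ (by fun_prop)]
  refine lintegral_mono fun x => ?_
  rw [mul_comm]
  gcongr
  exact hM x

theorem lintegral_gagliardoDensity_ne_top {K : ℝ≥0} (hg : LipschitzWith K g)
    (hgc : HasCompactSupport g) (hs₀ : 0 < s) (hs₁ : s < 1) (hp : 0 < p) :
    ∫⁻ x, gagliardoDensity s p g x ≠ ∞ := by
  obtain ⟨M, hM⟩ := exists_enorm_le_coe_of_hasCompactSupport hg.continuous hgc
  let k : E → ℝ≥0∞ := fun z =>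
    (K + 2 * M : ℝ≥0) ^ p * (min ‖z‖ₑ 1 ^ p / ‖z‖ₑ ^ (finrank ℝ E + s * p))
  have hkfin : ∫⁻ z, k z ≠ ∞ := by
    rw [lintegral_const_mul _ (by fun_prop)]
    exact ENNReal.mul_ne_top (by finiteness)
      (lintegral_min_enorm_one_rpow_div_ne_top volume (by positivity) (by nlinarith))
  have hkernel (x y : E) :
      ‖g x - g y‖ₑ ^ p / ‖x - y‖ₑ ^ (finrank ℝ E + s * p) ≤ k (x - y) := by
    simp only [k]
    rw [← mul_div_assoc, ← ENNReal.mul_rpow_of_nonneg _ _ hp.le]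
    gcongr
    exact enorm_sub_le_mul_min_enorm_one hg hM x y
  let χ : E → ℝ≥0∞ := (tsupport g).indicator 1
  have hχfin : ∫⁻ x, χ x ≠ ∞ := by
    simpa [χ, lintegral_indicator_one (isClosed_tsupport g).measurableSet] using hgc.measure_ne_top
  refine ne_top_of_le_ne_top (b := 2 * ((∫⁻ x, χ x) * ∫⁻ z, k z)) (by finiteness) ?_
  calc ∫⁻ x, gagliardoDensity s p g x ≤ ∫⁻ x, ∫⁻ y, (χ x + χ y) * k (x - y) :=
        lintegral_mono fun x => lintegral_mono fun y =>
          (enorm_sub_rpow_div_le_indicator_mul g hp x y _).trans (mul_le_mul_right (hkernel x y) _)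
    _ = 2 * ((∫⁻ x, χ x) * ∫⁻ z, k z) := lintegral_lintegral_add_mul_sub volume
        (measurable_one.indicator (isClosed_tsupport g).measurableSet) (by fun_prop)

theorem lintegral_enorm_fderiv_rpow_ne_top [NormedSpace ℝ F] (hg : ContDiff ℝ 1 g)
    (hgc : HasCompactSupport g) (hp : 0 < p) : ∫⁻ x, ‖fderiv ℝ g x‖ₑ ^ p ≠ ∞ := by
  simpa [weightedEnergy] using weightedEnergy_neg_ne_top (β := 0)
    (hg.continuous_fderiv one_ne_zero) (hgc.fderiv ℝ) (by simpa using finrank_pos) hp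

end Finiteness

section SobolevEnergy

variable {E F : Type*} [NormedAddCommGroup E] [NormedSpace ℝ E] [MeasureSpace E]
  [NormedAddCommGroup F] [NormedSpace ℝ F]

/-- The `p`-th power of the homogeneous Sobolev seminorm of order `s ∈ (0, 1]`, as an extended
nonnegative real, so that no finiteness has to be assumed to speak about it. -/
noncomputable def sobolevEnergy (s p : ℝ) (g : E → F) : ℝ≥0∞ :=
  if s = 1 then ∫⁻ x, ‖fderiv ℝ g x‖ₑ ^ p else ∫⁻ x, gagliardoDensity s p g x

end SobolevEnergy

section Interpolation

variable {E F : Type*} [NormedAddCommGroup E] [MeasureSpace E] [OpensMeasurableSpace E]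
  [NullSingletonClass (volume : Measure E)] [NormedAddCommGroup F] {g : E → F}

theorem weightedEnergy_interpolation_le (hg : Continuous g) {θ w₀ w₁ q₀ q₁ : ℝ} (hθ : θ ∈ Icc 0 1)
    (hq₀ : 0 ≤ q₀) (hq₁ : 0 ≤ q₁) :
    weightedEnergy (w₀ * (1 - θ) + w₁ * θ) (q₀ * (1 - θ) + q₁ * θ) g ≤
      weightedEnergy w₀ q₀ g ^ (1 - θ) * weightedEnergy w₁ q₁ g ^ θ := by
  have hθ₁ : 0 ≤ 1 - θ := sub_nonneg.2 hθ.2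
  have hmeas : Measurable fun x => ‖g x‖ₑ := hg.enorm.measurable
  refine le_of_eq_of_le (lintegral_congr_ae ?_) (ENNReal.lintegral_mul_norm_pow_le
    (by fun_prop) (by fun_prop) hθ₁ hθ.1 (sub_add_cancel 1 θ))
  filter_upwards [Measure.ae_ne volume (0 : E)] with x hx
  have hx0 : ‖x‖ₑ ≠ 0 := enorm_ne_zero.2 hx
  rw [ENNReal.rpow_add _ _ hx0 (by finiteness),
    ENNReal.rpow_add_of_nonneg _ _ (mul_nonneg hq₀ hθ₁) (mul_nonneg hq₁ hθ.1),
    ENNReal.mul_rpow_of_nonneg _ _ hθ₁, ENNReal.mul_rpow_of_nonneg _ _ hθ.1]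
  simp only [ENNReal.rpow_mul]
  ring

theorem integral_norm_rpow_mul_norm_rpow (hg : Continuous g) (w : ℝ) {q : ℝ} (hq : 0 ≤ q) :
    ∫ x, (‖x‖ ^ w * ‖g x‖) ^ q = (weightedEnergy (w * q) q g).toReal := by
  have hmeas : Measurable fun x => ‖g x‖ₑ := hg.enorm.measurable
  rw [weightedEnergy, ← integral_toReal (by fun_prop)]
  · simp [ENNReal.toReal_mul, ← ENNReal.toReal_rpow, rpow_mul, mul_rpow, rpow_nonneg]
  · filter_upwards [Measure.ae_ne volume (0 : E)] with x hx
    have hx0 : ‖x‖ₑ ≠ 0 := enorm_ne_zero.2 hx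
    finiteness

end Interpolation

theorem one_le_mul_one_sub_add_mul {x y θ : ℝ} (hx : 1 ≤ x) (hy : 1 ≤ y) (hθ : θ ∈ Icc (0 : ℝ) 1) :
    1 ≤ x * (1 - θ) + y * θ := by
  nlinarith [hθ.1, hθ.2]

/-- The exponents `γ = q (1 - θ) + (p + q τ) θ` obtained by interpolating between `L^q` and
`L^(p + q τ)`, and `a`, the power of the seminorm it produces. Writing `a γ = p θ` avoids dividing
by `γ`. -/
structure InterpolationExponents (p q τ θ γ a : ℝ) : Prop where
  mem_Icc : θ ∈ Icc (0 : ℝ) 1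
  eq_add : γ = q * (1 - θ) + (p + q * τ) * θ
  mul_eq : a * γ = p * θ

namespace InterpolationExponents

variable {p q τ θ γ a : ℝ}

theorem one_le (h : InterpolationExponents p q τ θ γ a) (hp : 1 ≤ p) (hq : 1 ≤ q) (hτ : 0 ≤ τ) :
    1 ≤ γ :=
  (one_le_mul_one_sub_add_mul hq (le_add_of_le_of_nonneg hp (by positivity)) h.mem_Icc).trans_eq
    h.eq_add.symm

theorem power_mem_Icc (h : InterpolationExponents p q τ θ γ a) (hp : 1 ≤ p) (hq : 1 ≤ q)
    (hτ : 0 ≤ τ) : a ∈ Icc (0 : ℝ) 1 := by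
  have hγ : 0 < γ := one_pos.trans_le (h.one_le hp hq hτ)
  obtain ⟨hθ₀, hθ₁⟩ := h.mem_Icc
  refine ⟨?_, ?_⟩
  · rw [eq_div_of_mul_eq hγ.ne' h.mul_eq]
    positivity
  · have hrest : 0 ≤ q * (1 - θ) + q * τ * θ :=
      add_nonneg (mul_nonneg (by positivity) (by linarith)) (by positivity)
    rw [eq_div_of_mul_eq hγ.ne' h.mul_eq, div_le_one hγ, h.eq_add]
    linarith

end InterpolationExponents

theorem rpow_inv_le_of_le_rpow_mul_rpow {T W S K : ℝ≥0∞} {p q τ θ γ a : ℝ} (hK : 1 ≤ K)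
    (hp : 1 ≤ p) (hq : 1 ≤ q) (hτ : 0 ≤ τ) (hexp : InterpolationExponents p q τ θ γ a)
    (h : T ≤ W ^ (1 - θ) * (K * (W ^ τ * S)) ^ θ) :
    T ^ γ⁻¹ ≤ K * (S ^ p⁻¹) ^ a * (W ^ q⁻¹) ^ (1 - a) := by
  have hγ₁ : 1 ≤ γ := hexp.one_le hp hq hτ
  obtain ⟨⟨hθ₀, hθ₁⟩, hγ, ha⟩ := hexp
  have hγ₀ : 0 < γ := by linarith
  have hS : θ * γ⁻¹ = p⁻¹ * a := by field_simp; linarith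
  have hW : (1 - θ + τ * θ) * γ⁻¹ = q⁻¹ * (1 - a) := by
    field_simp
    linear_combination ha - hγ
  have hKθ : θ * γ⁻¹ ≤ 1 := by rw [← div_eq_mul_inv]; exact div_le_one_of_le₀ (by linarith) hγ₀.le
  calc T ^ γ⁻¹ ≤ (W ^ (1 - θ) * (K * (W ^ τ * S)) ^ θ) ^ γ⁻¹ := by gcongr
    _ = K ^ (θ * γ⁻¹) * S ^ (θ * γ⁻¹) * W ^ ((1 - θ + τ * θ) * γ⁻¹) := by
        rw [ENNReal.mul_rpow_of_nonneg _ _ hθ₀, ENNReal.mul_rpow_of_nonneg _ _ hθ₀,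
          ENNReal.rpow_mul, ENNReal.rpow_mul, ENNReal.rpow_mul,
          ENNReal.rpow_add_of_nonneg _ _ (by linarith) (by positivity), ENNReal.rpow_mul]
        simp only [← ENNReal.mul_rpow_of_nonneg _ _ (inv_nonneg.2 hγ₀.le)]
        ring_nf
    _ ≤ K * S ^ (θ * γ⁻¹) * W ^ ((1 - θ + τ * θ) * γ⁻¹) := by
        gcongr
        simpa using ENNReal.rpow_le_rpow_of_exponent_le hK hKθ
    _ = _ := by rw [hS, hW, ENNReal.rpow_mul, ENNReal.rpow_mul]

section SobolevBound

variable {E F : Type*} [NormedAddCommGroup E] [InnerProductSpace ℝ E] [FiniteDimensional ℝ E]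
  [MeasurableSpace E] [BorelSpace E] [Nontrivial E] [NormedAddCommGroup F] [NormedSpace ℝ F]
  {s p q : ℝ}

theorem sobolevEnergy_ne_top {g : E → F} (hg : ContDiff ℝ 1 g) (hgc : HasCompactSupport g)
    (hs₀ : 0 < s) (hs₁ : s ≤ 1) (hp : 0 < p) : sobolevEnergy s p g ≠ ∞ := by
  unfold sobolevEnergy
  split_ifs with hs
  · exact lintegral_enorm_fderiv_rpow_ne_top hg hgc hp
  · obtain ⟨K, hK⟩ := hg.lipschitzWith_of_hasCompactSupport hgc one_ne_zero
    exact lintegral_gagliardoDensity_ne_top hK hgc hs₀ (hs₁.lt_of_ne hs) hp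

variable (E F) in
theorem exists_weightedEnergy_le_sobolevEnergy (hs : 0 ≤ s) (hp : 1 ≤ p) (hq : 1 ≤ q) :
    ∃ K : ℝ≥0∞, K ≠ ∞ ∧ ∀ β ∈ Icc 0 (finrank ℝ E - 1 : ℝ), ∀ g : E → F, ContDiff ℝ 1 g →
      FactorsThrough g (‖·‖) → weightedEnergy (-β) q g ≠ ∞ → sobolevEnergy s p g ≠ ∞ →
      weightedEnergy ((finrank ℝ E - 1 - β) * (s * p)) (p + q * (s * p)) g ≤
        K * (weightedEnergy (-β) q g ^ (s * p) * sobolevEnergy s p g) := by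
  set ω := volume (ball (0 : E) 1)
  have hω : ω ≠ 0 := (measure_ball_pos _ _ one_pos).ne'
  have hωfin : ω ≠ ∞ := measure_ball_lt_top.ne
  unfold sobolevEnergy
  split_ifs with hs₁
  · subst hs₁
    have hnω : (finrank ℝ E * ω) ^ p ≠ 0 :=
      (ENNReal.rpow_pos (pos_iff_ne_zero.2 (mul_ne_zero (by simpa using finrank_pos.ne') hω))
        (by finiteness)).ne'
    refine ⟨2 ^ (p + q * (p - 1)) / (finrank ℝ E * ω) ^ p, by finiteness,
      fun β hβ g hg hrad hW hS => ?_⟩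
    rw [one_mul, ← ENNReal.mul_div_right_comm,
      ENNReal.le_div_iff_mul_le (.inl hnω) (.inl (by finiteness)), mul_comm]
    exact rpow_mul_weightedEnergy_le_lintegral_fderiv hg hrad hp hq hβ.2 hW hS
  · refine ⟨2 ^ (p + q * (s * p)) * ((4 ^ finrank ℝ E / ω) ^ (s * p) / ω), by finiteness,
      fun β hβ g hg hrad hW hS => ?_⟩
    refine (weightedEnergy_le_lintegral_gagliardoDensity hg.continuous.stronglyMeasurable hrad
      hs hp hq hβ.1 hβ.2 hW hS).trans_eq ?_
    rw [ENNReal.mul_rpow_of_nonneg _ _ (by positivity)]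
    simp only [div_eq_mul_inv]
    ring

variable (E F) in
theorem exists_rpow_weightedEnergy_le (hs₀ : 0 < s) (hs₁ : s ≤ 1) (hp : 1 ≤ p) (hq : 1 ≤ q) :
    ∃ K > (0 : ℝ), ∀ β ∈ Icc 0 (finrank ℝ E - 1 : ℝ), ∀ θ γ a : ℝ,
      θ * (β + (finrank ℝ E - 1 - β) * (s * p)) = β → InterpolationExponents p q (s * p) θ γ a →
      ∀ g : E → F, FactorsThrough g (‖·‖) → ContDiff ℝ 1 g → HasCompactSupport g →
      (weightedEnergy 0 γ g ^ γ⁻¹).toReal ≤ K * (sobolevEnergy s p g ^ p⁻¹).toReal ^ a *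
        (weightedEnergy (-β) q g ^ q⁻¹).toReal ^ (1 - a) := by
  obtain ⟨K₀, hK₀, h⟩ := exists_weightedEnergy_le_sobolevEnergy E F hs₀.le hp hq
  set K := max 1 K₀
  have hK₁ : 1 ≤ K := le_max_left _ _
  have hK : K ≠ ∞ := by finiteness
  refine ⟨K.toReal, ENNReal.toReal_pos (one_pos.trans_le hK₁).ne' hK,
    fun β hβ θ γ a hβθ hexp g hrad hg hgc => ?_⟩
  have hW := weightedEnergy_neg_ne_top hg.continuous hgc (by linarith [hβ.2] : β < finrank ℝ E)
    (one_pos.trans_le hq)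
  have hS := sobolevEnergy_ne_top hg hgc hs₀ hs₁ (one_pos.trans_le hp)
  have hinterp : weightedEnergy 0 γ g ≤ weightedEnergy (-β) q g ^ (1 - θ) *
      (K * (weightedEnergy (-β) q g ^ (s * p) * sobolevEnergy s p g)) ^ θ :=
    calc weightedEnergy 0 γ g
        ≤ weightedEnergy (-β) q g ^ (1 - θ) *
            weightedEnergy ((finrank ℝ E - 1 - β) * (s * p)) (p + q * (s * p)) g ^ θ := by
          rw [hexp.eq_add, show (0 : ℝ) = -β * (1 - θ) + (finrank ℝ E - 1 - β) * (s * p) * θ by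
            linear_combination -hβθ]
          exact weightedEnergy_interpolation_le hg.continuous hexp.mem_Icc (by positivity)
            (by positivity)
      _ ≤ _ := by
          gcongr
          · exact hexp.mem_Icc.1
          · exact (h β hβ g hg hrad hW hS).trans (by gcongr; exact le_max_right _ _)
  have hsp : 0 ≤ s * p := by positivity
  obtain ⟨ha₀, ha₁⟩ := hexp.power_mem_Icc hp hq hsp
  have hbound := rpow_inv_le_of_le_rpow_mul_rpow hK₁ hp hq hsp hexp hinterp
  simpa [ENNReal.toReal_mul, ENNReal.toReal_rpow] using
    ENNReal.toReal_mono (by finiteness [sub_nonneg.2 ha₁]) hbound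

end SobolevBound

theorem sobolevSemi_eq_toReal {d : ℕ} [Nontrivial (EuclideanSpace ℝ (Fin d))] {s p : ℝ}
    (hs₀ : 0 < s) (hs₁ : s ≤ 1) (hp : 0 < p) {g : EuclideanSpace ℝ (Fin d) → ℝ}
    (hg : ContDiff ℝ 1 g) (hgc : HasCompactSupport g) :
    sobolevSemi d s p g = (sobolevEnergy s p g ^ p⁻¹).toReal := by
  have hfin := sobolevEnergy_ne_top hg hgc hs₀ hs₁ hp
  rw [← ENNReal.toReal_rpow]
  unfold sobolevSemi sobolevEnergy at *
  rw [if_neg hs₀.ne', one_div]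
  split_ifs at * with hs
  · have : Measurable fun x => ‖fderiv ℝ g x‖ₑ :=
      (hg.continuous_fderiv one_ne_zero).enorm.measurable
    rw [← integral_toReal (by fun_prop) (.of_forall fun x => by finiteness)]
    simp [← ENNReal.toReal_rpow]
  · have hmeas := measurable_gagliardoDensity hg.continuous.stronglyMeasurable s p
    rw [← integral_toReal hmeas.aemeasurable (ae_lt_top hmeas hfin)]
    congr 2 with x
    have hgm := hg.continuous.measurable
    rw [gagliardoDensity, ← integral_toReal (by fun_prop)]
    · simp [ENNReal.toReal_div, ← ENNReal.toReal_rpow]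
    · refine .of_forall fun y => ?_
      rcases eq_or_ne x y with rfl | hxy
      · simp [hp]
      · have hxy0 : ‖x - y‖ₑ ≠ 0 := enorm_ne_zero.2 (sub_ne_zero.2 hxy)
        finiteness

theorem exists_interpolationExponents {d s p q α ε β γ a : ℝ} (hβ : d - α + 2 * ε = 2 * β)
    (hsp : 0 < s * p) (hβ₀ : 0 < β) (hβ₁ : β ≤ d - 1) (hp : 1 ≤ p) (hq : 1 ≤ q)
    (hD : 0 < p * (d + α - 2 * ε) - 2 * q * (d - s * p))
    (hγ : γ = q + (q * (s * p - 1) + p) * (d - α + 2 * ε) /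
      (s * p * (d + α - 2 * ε - 2) + (d - α + 2 * ε)))
    (ha : a = p * (γ * (d + α - 2 * ε) - 2 * q * d) /
      (γ * (p * (d + α - 2 * ε) - 2 * q * (d - s * p)))) :
    ∃ θ, θ * (β + (d - 1 - β) * (s * p)) = β ∧ InterpolationExponents p q (s * p) θ γ a := by
  obtain rfl : α = d + 2 * ε - 2 * β := by linarith
  have hκ : 0 ≤ (d - 1 - β) * (s * p) := mul_nonneg (by linarith) hsp.le
  have hden : 0 < β + (d - 1 - β) * (s * p) := by positivity
  set θ := β / (β + (d - 1 - β) * (s * p))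
  have hθ : θ * (β + (d - 1 - β) * (s * p)) = β := div_mul_cancel₀ _ hden.ne'
  have hθmem : θ ∈ Icc 0 1 := ⟨by positivity, div_le_one_of_le₀ (by linarith) hden.le⟩
  have hγθ : γ = q * (1 - θ) + (p + q * (s * p)) * θ := by
    rw [hγ, show d - (d + 2 * ε - 2 * β) + 2 * ε = 2 * β by ring,
      show s * p * (d + (d + 2 * ε - 2 * β) - 2 * ε - 2) + 2 * β =
        2 * (β + (d - 1 - β) * (s * p)) by ring]
    simp only [θ]
    field_simp
    ring
  have hγ₀ : γ ≠ 0 := by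
    have hm : 1 ≤ p + q * (s * p) := le_add_of_le_of_nonneg hp (by positivity)
    have hγ₁ := one_le_mul_one_sub_add_mul hq hm hθmem
    rw [hγθ]
    positivity
  refine ⟨θ, hθ, hθmem, hγθ, ?_⟩
  have hnum : γ * (d + (d + 2 * ε - 2 * β) - 2 * ε) - 2 * q * d =
      θ * (p * (d + (d + 2 * ε - 2 * β) - 2 * ε) - 2 * q * (d - s * p)) := by
    rw [hγθ]
    linear_combination (2 * q) * hθ
  rw [ha, hnum, div_mul_eq_mul_div, div_eq_iff (mul_ne_zero hγ₀ hD.ne')]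
  ring

theorem stmt5 (d : ℕ) (hd : 2 ≤ d) (s p q α : ℝ)
    (hs0 : 0 < s) (hs1 : s ≤ 1) (hp1 : 1 ≤ p) (hq1 : 1 ≤ q)
    (hα0 : 0 < α) (hαd : α < d)
    (hD : 0 < p * ((d : ℝ) + α) - 2 * q * ((d : ℝ) - s * p)) :
    ∃ C > 0, ∃ ε₀ > 0, ∀ ε : ℝ, 0 < ε → ε < ε₀ →
      0 < p * ((d : ℝ) + α - 2 * ε) - 2 * q * ((d : ℝ) - s * p) →
      ∀ γε aε : ℝ,
      γε = q + (q * (s * p - 1) + p) * ((d : ℝ) - α + 2 * ε) /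
        (s * p * ((d : ℝ) + α - 2 * ε - 2) + ((d : ℝ) - α + 2 * ε)) →
      aε = p * (γε * ((d : ℝ) + α - 2 * ε) - 2 * q * d) /
        (γε * (p * ((d : ℝ) + α - 2 * ε) - 2 * q * ((d : ℝ) - s * p))) →
      ∀ g : EuclideanSpace ℝ (Fin d) → ℝ,
        (∀ x y : EuclideanSpace ℝ (Fin d), ‖x‖ = ‖y‖ → g x = g y) →
        ContDiff ℝ 1 g → HasCompactSupport g →
        (∫ x, |g x| ^ γε) ^ (1 / γε) ≤
          C * sobolevSemi d s p g ^ aε *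
            ((∫ x, (‖x‖ ^ (-(((d : ℝ) - α) / (2 * q) + ε / q)) * |g x|) ^ q) ^ (1 / q))
              ^ (1 - aε) := by
  have : Nontrivial (EuclideanSpace ℝ (Fin d)) :=
    Module.nontrivial_of_finrank_pos (R := ℝ) (by simp; omega)
  have hd2 : (2 : ℝ) ≤ d := by exact_mod_cast hd
  have hp : 0 < p := one_pos.trans_le hp1
  obtain ⟨K, hK, hbound⟩ :=
    exists_rpow_weightedEnergy_le (EuclideanSpace ℝ (Fin d)) ℝ hs0 hs1 hp1 hq1
  refine ⟨K, hK, α / 2, half_pos hα0,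
    fun ε hε hεα hDε γ a hγ ha g hrad hg hgc => ?_⟩
  have hβ : (d - α) / 2 + ε ∈ Icc 0 (finrank ℝ (EuclideanSpace ℝ (Fin d)) - 1 : ℝ) := by
    rw [finrank_euclideanSpace_fin]
    constructor <;> linarith
  obtain ⟨θ, hθ, hexp⟩ := exists_interpolationExponents (β := (d - α) / 2 + ε) (by ring)
    (mul_pos hs0 hp) (by linarith) (by linarith) hp1 hq1 hDε hγ ha
  have hγ₀ : 0 ≤ γ := by linarith [hexp.one_le hp1 hq1 (by positivity)]
  have hweight : -((d - α) / (2 * q) + ε / q) * q = -((d - α) / 2 + ε) := by field_simp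
  have hL := integral_norm_rpow_mul_norm_rpow hg.continuous 0 hγ₀
  have hW := integral_norm_rpow_mul_norm_rpow hg.continuous (-((d - α) / (2 * q) + ε / q))
    (by positivity : 0 ≤ q)
  simp only [rpow_zero, one_mul, zero_mul, norm_eq_abs, hweight] at hL hW
  rw [hL, hW, sobolevSemi_eq_toReal hs0 hs1 hp hg hgc, one_div, one_div,
    ENNReal.toReal_rpow (weightedEnergy 0 γ g), ENNReal.toReal_rpow (weightedEnergy (-_) q g)]
  exact hbound _ hβ θ γ a (by simpa using hθ) hexp g (fun x y h => hrad x y h) hg hgc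
end
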